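/- arXiv:2504.20739 — 6 statements merged into one kernel-verified Lean document; each statement's English description precedes it below -/
import Mathlib

section
/- Fix integers d ≥ 2 and ℓ ≥ 2, and let S = {−(d−1), …, −2, −1, 1, 2, …, d−1} ⊆ ℤ. The number of subsets X ⊆ S with |X| = ℓ−1 such that for every i ∈ {1, …, d−1}, if both −i ∈ X and i ∈ X then there exists j ∈ X with −i < j < i, equals 2·∑_{k=0}^{d−2} C(2k, ℓ−2), where C(·,·) denotes the binomial coefficient. -/
/-!
For nonempty `X`, the interlacing condition says exactly that the element of `X` of least
absolute value is unique. Once that element `m` is chosen, the other `ℓ - 2` elements form an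
arbitrary subset of the `2 (d - 1 - |m|)` elements of `S` of larger absolute value; every value of
`|m|` occurs for both signs of `m`, which gives the factor `2`.
-/

open Finset

/-- The minimum of `f` on `X` is attained at exactly one element of `X`. Stated as strict
minimality of a witness, so that it makes sense for values in a preorder; in particular `X` is
nonempty. -/
def HasUniqueMinimizer {α β : Type*} [Preorder β] (f : α → β) (X : Finset α) : Prop :=
  ∃ m ∈ X, ∀ x ∈ X, x ≠ m → f m < f x

section Minimizer

variable {α β : Type*} [Preorder β] {f : α → β}

lemma hasUniqueMinimizer_insert [DecidableEq α] {m : α} {Y : Finset α} (hY : ∀ y ∈ Y, f m < f y) :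
    HasUniqueMinimizer f (insert m Y) :=
  ⟨m, mem_insert_self m Y, fun x hx hxm => hY x (mem_of_mem_insert_of_ne hx hxm)⟩

lemma eq_and_eq_of_insert_eq_insert [DecidableEq α] {m m' : α} {Y Y' : Finset α}
    (hY : ∀ y ∈ Y, f m < f y) (hY' : ∀ y ∈ Y', f m' < f y) (h : insert m Y = insert m' Y') :
    m = m' ∧ Y = Y' := by
  have hm : m ∉ Y := fun hm => lt_irrefl _ (hY m hm)
  have hm' : m' ∉ Y' := fun hm' => lt_irrefl _ (hY' m' hm')
  obtain rfl : m = m' := by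
    by_contra hne
    have hmY' : m ∈ Y' := mem_of_mem_insert_of_ne (h ▸ mem_insert_self m Y) hne
    have hmY : m' ∈ Y := mem_of_mem_insert_of_ne (h ▸ mem_insert_self m' Y') (Ne.symm hne)
    exact lt_asymm (hY m' hmY) (hY' m hmY')
  exact ⟨rfl, by rw [← erase_insert hm, h, erase_insert hm']⟩

theorem card_powersetCard_filter_hasUniqueMinimizer [DecidableLT β]
    [DecidablePred (HasUniqueMinimizer f)] (S : Finset α) (n : ℕ) :
    #{X ∈ S.powersetCard (n + 1) | HasUniqueMinimizer f X} =
      ∑ m ∈ S, (#{x ∈ S | f m < f x}).choose n := by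
  classical
  simp_rw [← card_powersetCard, ← card_sigma]
  symm
  refine card_bij (fun p _ => insert p.1 p.2) ?mem ?inj ?surj
  case mem =>
    rintro ⟨m, Y⟩ hp
    simp only [mem_sigma, mem_powersetCard, subset_iff, mem_filter] at hp ⊢
    obtain ⟨hm, hYS, hcard⟩ := hp
    have hmY : m ∉ Y := fun h => lt_irrefl _ (hYS h).2
    refine ⟨⟨fun x hx => ?_, by rw [card_insert_of_notMem hmY, hcard]⟩,
      hasUniqueMinimizer_insert fun y hy => (hYS hy).2⟩
    rcases mem_insert.1 hx with rfl | hxY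
    exacts [hm, (hYS hxY).1]
  case inj =>
    rintro ⟨m, Y⟩ hp ⟨m', Y'⟩ hp' h
    simp only [mem_sigma, mem_powersetCard, subset_iff, mem_filter] at hp hp'
    obtain ⟨rfl, rfl⟩ := eq_and_eq_of_insert_eq_insert (fun y hy => (hp.2.1 hy).2)
      (fun y hy => (hp'.2.1 hy).2) h
    rfl
  case surj =>
    intro X hX
    obtain ⟨hX, m, hm, hmin⟩ := mem_filter.1 hX
    obtain ⟨hXS, hcard⟩ := mem_powersetCard.1 hX
    refine ⟨⟨m, X.erase m⟩, mem_sigma.2 ⟨hXS hm, mem_powersetCard.2 ⟨fun x hx => ?_, ?_⟩⟩,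
      insert_erase hm⟩
    · obtain ⟨hxm, hxX⟩ := mem_erase.1 hx
      exact mem_filter.2 ⟨hXS hxX, hmin x hxX hxm⟩
    · rw [card_erase_of_mem hm, hcard, Nat.add_sub_cancel]

end Minimizer

theorem hasUniqueMinimizer_abs_iff {G : Type*} [AddCommGroup G] [LinearOrder G]
    [IsOrderedAddMonoid G] {X : Finset G} (hX : X.Nonempty) :
    HasUniqueMinimizer (|·|) X ↔
      ∀ i, 0 < i → -i ∈ X → i ∈ X → ∃ j ∈ X, -i < j ∧ j < i := by
  constructor
  · rintro ⟨m, hm, hmin⟩ i hi hneg hpos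
    refine ⟨m, hm, abs_lt.1 ?_⟩
    rcases eq_or_ne i m with rfl | him
    · have := hmin (-i) hneg (neg_lt_self hi).ne
      simp only [abs_neg, lt_self_iff_false] at this
    · simpa only [abs_of_pos hi] using hmin i hpos him
  · intro h
    obtain ⟨m, hm, hmin⟩ := exists_min_image X (|·|) hX
    refine ⟨m, hm, fun x hx hxm => (hmin x hx).lt_of_ne fun habs => ?_⟩
    obtain rfl : x = -m := (abs_eq_abs.1 habs.symm).resolve_left hxm
    have hm0 : m ≠ 0 := fun h0 => hxm (by rw [h0, neg_zero])
    have hboth : -|m| ∈ X ∧ |m| ∈ X := by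
      rcases abs_choice m with h | h <;> rw [h]
      exacts [⟨hx, hm⟩, ⟨by rwa [neg_neg], hx⟩]
    obtain ⟨j, hj, hjm⟩ := h |m| (abs_pos.2 hm0) hboth.1 hboth.2
    exact (hmin j hj).not_gt (abs_lt.2 hjm)

/-- The nonzero integers of absolute value at most `N`; the set `S` of the theorem is the case
`N = d - 1`. -/
noncomputable def puncturedIcc (N : ℕ) : Finset ℤ :=
  (Icc (-N : ℤ) N).erase 0

lemma mem_puncturedIcc {N : ℕ} {x : ℤ} : x ∈ puncturedIcc N ↔ x ≠ 0 ∧ |x| ≤ N := by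
  rw [puncturedIcc, mem_erase, mem_Icc, abs_le]

lemma puncturedIcc_succ (N : ℕ) :
    puncturedIcc (N + 1) = insert (N + 1 : ℤ) (insert (-(N + 1) : ℤ) (puncturedIcc N)) := by
  ext x
  simp only [puncturedIcc, mem_erase, mem_Icc, mem_insert]
  omega

lemma sum_puncturedIcc_natAbs {M : Type*} [AddCommMonoid M] (g : ℕ → M) (N : ℕ) :
    ∑ x ∈ puncturedIcc N, g x.natAbs = 2 • ∑ k ∈ range N, g (k + 1) := by
  induction N with
  | zero => simp [puncturedIcc]
  | succ N ih =>
    have hneg : (-(N + 1) : ℤ) ∉ puncturedIcc N := by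
      simp only [puncturedIcc, mem_erase, mem_Icc]; omega
    have hpos : (N + 1 : ℤ) ∉ insert (-(N + 1) : ℤ) (puncturedIcc N) := by
      simp only [puncturedIcc, mem_insert, mem_erase, mem_Icc]; omega
    have habs : (N + 1 : ℤ).natAbs = N + 1 := by omega
    rw [puncturedIcc_succ, sum_insert hpos, sum_insert hneg, Int.natAbs_neg, habs, ih,
      sum_range_succ, smul_add, two_nsmul (g (N + 1))]
    abel

lemma card_puncturedIcc_filter_abs_lt (N : ℕ) (m : ℤ) :
    #{x ∈ puncturedIcc N | |m| < |x|} = 2 * (N - m.natAbs) := by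
  have hfilter : {k ∈ range N | m.natAbs < k + 1} = Ico m.natAbs N := by
    ext k
    simp only [mem_filter, mem_range, mem_Ico]
    omega
  simp_rw [card_filter, Int.abs_eq_natAbs, Nat.cast_lt]
  rw [sum_puncturedIcc_natAbs (fun k => if m.natAbs < k then 1 else 0), ← card_filter, hfilter,
    Nat.card_Ico, smul_eq_mul]

theorem sum_choose_card_puncturedIcc_filter_abs_lt (N n : ℕ) :
    ∑ m ∈ puncturedIcc N, (#{x ∈ puncturedIcc N | |m| < |x|}).choose n =
      2 * ∑ k ∈ range N, (2 * k).choose n := by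
  simp_rw [card_puncturedIcc_filter_abs_lt]
  rw [sum_puncturedIcc_natAbs (fun r => (2 * (N - r)).choose n), smul_eq_mul,
    ← sum_range_reflect (fun k => (2 * k).choose n)]
  simp_rw [Nat.sub_sub, Nat.add_comm 1]

lemma subset_puncturedIcc_and_hasUniqueMinimizer_abs_iff {N n : ℕ} {X : Finset ℤ} :
    ((∀ i ∈ X, i ≠ 0 ∧ |i| ≤ (N : ℤ)) ∧ #X = n + 1 ∧
      ∀ i : ℤ, 1 ≤ i → i ≤ N → -i ∈ X → i ∈ X → ∃ j ∈ X, -i < j ∧ j < i) ↔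
    (X ⊆ puncturedIcc N ∧ #X = n + 1) ∧ HasUniqueMinimizer (|·|) X := by
  simp_rw [← mem_puncturedIcc, ← subset_iff]
  rw [← and_assoc]
  refine and_congr_right fun ⟨hXS, hcard⟩ => ?_
  rw [hasUniqueMinimizer_abs_iff (card_pos.1 (hcard ▸ n.succ_pos))]
  refine forall_congr' fun i => forall_congr' fun _ =>
    ⟨fun h hneg hpos => h ?_ hneg hpos, fun h _ => h⟩
  exact (le_abs_self i).trans (mem_puncturedIcc.1 (hXS hpos)).2

/-- The number of subsets `X` of `S = {-(d-1), …, -1, 1, …, d-1} ⊆ ℤ` with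
`|X| = ℓ - 1` such that whenever both `-i` and `i` belong to `X` (for `1 ≤ i ≤ d-1`)
there exists `j ∈ X` with `-i < j < i`, equals `2 · ∑_{k=0}^{d-2} C(2k, ℓ-2)`. -/
theorem crossPolytope_monotone_path_count (d ℓ : ℕ) (hd : 2 ≤ d) (hℓ : 2 ≤ ℓ) :
    Set.ncard {X : Finset ℤ |
      (∀ i ∈ X, i ≠ 0 ∧ |i| ≤ (d : ℤ) - 1) ∧
      X.card = ℓ - 1 ∧
      (∀ i : ℤ, 1 ≤ i → i ≤ (d : ℤ) - 1 → -i ∈ X → i ∈ X →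
        ∃ j ∈ X, -i < j ∧ j < i)} =
      2 * ∑ k ∈ Finset.range (d - 1), Nat.choose (2 * k) (ℓ - 2) := by
  classical
  obtain ⟨N, rfl⟩ := Nat.exists_eq_add_of_le' (one_le_two.trans hd)
  obtain ⟨n, rfl⟩ := Nat.exists_eq_add_of_le' hℓ
  simp only [Nat.cast_add, Nat.cast_one, add_sub_cancel_right, Nat.add_sub_cancel,
    Nat.add_succ_sub_one, subset_puncturedIcc_and_hasUniqueMinimizer_abs_iff]
  simp_rw [← mem_powersetCard, ← mem_filter]
  rw [setOfPred_mem, Set.ncard_coe_finset, card_powersetCard_filter_hasUniqueMinimizer,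
    sum_choose_card_puncturedIcc_filter_abs_lt]
end

section
/- For an integer d ≥ 3 and integers ℓ ≥ 2 define N(d,ℓ) = 2·∑_{k=0}^{d−2} C(2k, ℓ−2). Then the sequence ℓ ↦ N(d,ℓ) is unimodal with mode d: N(d,ℓ) ≤ N(d,ℓ+1) for all ℓ with 2 ≤ ℓ ≤ d−1, and N(d,ℓ) ≥ N(d,ℓ+1) for all ℓ ≥ d. Moreover, if d ≥ 4 the mode is unique: N(d,ℓ) < N(d,d) for every ℓ ≥ 2 with ℓ ≠ d. -/
/-- `N d ℓ = 2 · ∑_{k=0}^{d-2} C(2k, ℓ-2)`, the number of monotone paths of length `ℓ`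
on the `d`-dimensional cross-polytope for a generic direction. -/
def crossPathCount (d ℓ : ℕ) : ℕ :=
  2 * ∑ k ∈ Finset.range (d - 1), Nat.choose (2 * k) (ℓ - 2)

/-!
Put `S n m = ∑ k < n, C(2k, m)`. To the right of `m = n - 1` every summand decreases in `m`.
To the left of it, Pascal's rule telescopes to `2 S n (m+1) + S n m = C(2n, m+2)`, so that
`S n m < S n (m+1)` amounts to `3 S n m < C(2n, m+2)`. The same identity at `m - 1` reduces this to
an upper bound on the ratio `S n m / S n (m-1)`; the bound `C(2n, m+1) / C(2n, m)`, which an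
induction on `n` provides, is just sharp enough up to the peak.
-/

section Choose

variable {n k : ℕ}

theorem succ_mul_choose_succ_add_mul_choose (n k : ℕ) :
    (k + 1) * n.choose (k + 1) + k * n.choose k = n * n.choose k := by
  rcases le_or_gt k n with hk | hk
  · obtain ⟨j, rfl⟩ := Nat.exists_eq_add_of_le hk
    have := Nat.choose_succ_right_eq (k + j) k
    rw [Nat.add_sub_cancel_left] at this
    linarith
  · simp [Nat.choose_eq_zero_of_lt hk, Nat.choose_eq_zero_of_lt (hk.trans k.lt_succ_self)]

theorem choose_succ_le_choose (h : n ≤ 2 * k + 1) : n.choose (k + 1) ≤ n.choose k := by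
  have := succ_mul_choose_succ_add_mul_choose n k
  nlinarith [Nat.mul_le_mul_right (n.choose k) h]

theorem choose_succ_lt_choose (hkn : k ≤ n) (h : n ≤ 2 * k) : n.choose (k + 1) < n.choose k := by
  have := succ_mul_choose_succ_add_mul_choose n k
  have := Nat.choose_pos hkn
  nlinarith [Nat.mul_le_mul_right (n.choose k) h]

end Choose

/-- The sum `C(0, m) + C(2, m) + ⋯ + C(2n - 2, m)` of the entries of column `m` of Pascal's triangle
in its first `n` even-numbered rows. It is half of `crossPathCount (n + 1) (m + 2)`; the shift of
the indices avoids truncated subtraction. -/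
def evenChooseSum (n m : ℕ) : ℕ := ∑ k ∈ Finset.range n, (2 * k).choose m

theorem crossPathCount_eq_two_mul_evenChooseSum (n m : ℕ) :
    crossPathCount (n + 1) (m + 2) = 2 * evenChooseSum n m := rfl

namespace evenChooseSum

variable {n m : ℕ}

theorem succ_left (n m : ℕ) :
    evenChooseSum (n + 1) m = evenChooseSum n m + (2 * n).choose m :=
  Finset.sum_range_succ _ n

theorem zero_right (n : ℕ) : evenChooseSum n 0 = n := by simp [evenChooseSum]

theorem one_right (n : ℕ) : evenChooseSum (n + 1) 1 = n * (n + 1) := by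
  simp only [evenChooseSum, Nat.choose_one_right]
  rw [← Finset.mul_sum, mul_comm, Finset.sum_range_id_mul_two, Nat.add_sub_cancel, mul_comm]

theorem pos (h : m + 2 ≤ 2 * n) : 0 < evenChooseSum n m := by
  cases n with
  | zero => lia
  | succ n =>
    rw [succ_left]
    exact Nat.add_pos_right _ (Nat.choose_pos (by lia))

theorem two_mul_succ_add (n m : ℕ) :
    2 * evenChooseSum n (m + 1) + evenChooseSum n m = (2 * n).choose (m + 2) := by
  induction n with
  | zero => rfl
  | succ n ih =>
    have pascal : (2 * (n + 1)).choose (m + 2) =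
        (2 * n).choose m + 2 * (2 * n).choose (m + 1) + (2 * n).choose (m + 2) := by
      rw [mul_add_one, Nat.choose_succ_succ', Nat.choose_succ_succ', Nat.choose_succ_succ']
      ring
    rw [succ_left, succ_left, pascal, ← ih]
    ring

theorem choose_succ_le (n m : ℕ) :
    (2 * n).choose (m + 1) ≤ 2 * evenChooseSum n m + (2 * n).choose m := by
  rcases m with _ | _ | m
  · simp [zero_right]
  · have := two_mul_succ_add n 0
    simp only [zero_right, Nat.choose_one_right, zero_add] at this ⊢
    lia
  · linarith [two_mul_succ_add n m, two_mul_succ_add n (m + 1)]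

/-- With `S = evenChooseSum n`, in terms of ratios:
`S (m+1) / S m ≤ (2n-m-1) / (m+2) = C(2n, m+2) / C(2n, m+1)`.
By `two_mul_succ_add` this amounts to the log-concavity of `S`. -/
theorem add_two_mul_succ_add_le (n m : ℕ) :
    (m + 2) * evenChooseSum n (m + 1) + (m + 1) * evenChooseSum n m ≤
      2 * n * evenChooseSum n m := by
  induction n with
  | zero => simp [evenChooseSum]
  | succ n ih =>
    rw [succ_left, succ_left]
    linarith [succ_mul_choose_succ_add_mul_choose (2 * n) m, choose_succ_le n m]

theorem three_mul_lt_choose (h : m + 2 < n) :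
    3 * evenChooseSum n (m + 1) < (2 * n).choose (m + 3) := by
  obtain ⟨t, hnt⟩ := Nat.exists_eq_add_of_le (show m + 2 ≤ 2 * n by lia)
  have hpos : 0 < evenChooseSum n (m + 1) := pos (by lia)
  have absorb : (m + 3) * (2 * n).choose (m + 3) = t * (2 * n).choose (m + 2) := by
    have := Nat.choose_succ_right_eq (2 * n) (m + 2)
    rw [show 2 * n - (m + 2) = t by lia] at this
    linarith
  have ratio : (2 * t + m + 4) * evenChooseSum n (m + 1) ≤ (t + 1) * (2 * n).choose (m + 2) := by
    have hle := add_two_mul_succ_add_le n m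
    rw [hnt] at hle
    rw [← two_mul_succ_add]
    linarith
  have coeff : 3 * (m + 3) * (t + 1) < t * (2 * t + m + 4) := by
    obtain ⟨a, rfl⟩ := Nat.exists_eq_add_of_le (show m + 4 ≤ t by lia)
    ring_nf
    lia
  refine lt_of_mul_lt_mul_left ?_ (Nat.zero_le ((m + 3) * (t + 1)))
  calc (m + 3) * (t + 1) * (3 * evenChooseSum n (m + 1))
      = 3 * (m + 3) * (t + 1) * evenChooseSum n (m + 1) := by ring
    _ < t * (2 * t + m + 4) * evenChooseSum n (m + 1) := Nat.mul_lt_mul_of_pos_right coeff hpos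
    _ = t * ((2 * t + m + 4) * evenChooseSum n (m + 1)) := by ring
    _ ≤ t * ((t + 1) * (2 * n).choose (m + 2)) := Nat.mul_le_mul_left t ratio
    _ = (t + 1) * (t * (2 * n).choose (m + 2)) := by ring
    _ = (m + 3) * (t + 1) * (2 * n).choose (m + 3) := by rw [← absorb]; ring

theorem lt_succ_right (h : m + 2 < n) : evenChooseSum n (m + 1) < evenChooseSum n (m + 2) := by
  linarith [three_mul_lt_choose h, two_mul_succ_add n (m + 1)]

theorem monotoneOn (n : ℕ) : MonotoneOn (evenChooseSum (n + 1)) (Set.Iic n) := by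
  refine monotoneOn_of_le_add_one Set.ordConnected_Iic fun m _ _ hm ↦ ?_
  rw [Set.mem_Iic] at hm
  cases m with
  | zero =>
    rw [zero_right, zero_add, one_right]
    exact Nat.le_mul_of_pos_left _ hm
  | succ m => exact (lt_succ_right (by lia)).le

theorem strictMonoOn (hn : 2 ≤ n) : StrictMonoOn (evenChooseSum (n + 1)) (Set.Iic n) := by
  refine strictMonoOn_of_lt_add_one Set.ordConnected_Iic fun m _ _ hm ↦ ?_
  rw [Set.mem_Iic] at hm
  cases m with
  | zero =>
    rw [zero_right, zero_add, one_right]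
    exact lt_mul_of_one_lt_left n.succ_pos hn
  | succ m => exact lt_succ_right (by lia)

theorem succ_right_le (h : n ≤ m + 1) : evenChooseSum n (m + 1) ≤ evenChooseSum n m :=
  Finset.sum_le_sum fun k hk ↦ choose_succ_le_choose (by have := Finset.mem_range.mp hk; lia)

theorem antitoneOn (n : ℕ) : AntitoneOn (evenChooseSum (n + 1)) (Set.Ici n) :=
  antitoneOn_of_add_one_le Set.ordConnected_Ici fun _ _ hm _ ↦ succ_right_le (Nat.succ_le_succ hm)

theorem succ_succ_lt (n : ℕ) : evenChooseSum (n + 1) (n + 1) < evenChooseSum (n + 1) n := by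
  rw [succ_left n (n + 1), succ_left n n]
  exact add_lt_add_of_le_of_lt (succ_right_le n.le_succ) (choose_succ_lt_choose (by lia) le_rfl)

theorem lt_peak (hn : 2 ≤ n) (hm : m ≠ n) : evenChooseSum (n + 1) m < evenChooseSum (n + 1) n := by
  rcases hm.lt_or_gt with hlt | hgt
  · exact strictMonoOn hn hlt.le Set.self_mem_Iic hlt
  · exact (antitoneOn n n.le_succ hgt.le hgt).trans_lt (succ_succ_lt n)

end evenChooseSum

/-- for `d ≥ 3` the sequence `ℓ ↦ N(d,ℓ)` is unimodal with mode `d`,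
and for `d ≥ 4` the mode is unique. -/
theorem crossPathCount_unimodal (d : ℕ) (hd : 3 ≤ d) :
    (∀ ℓ : ℕ, 2 ≤ ℓ → ℓ ≤ d - 1 → crossPathCount d ℓ ≤ crossPathCount d (ℓ + 1)) ∧
    (∀ ℓ : ℕ, d ≤ ℓ → crossPathCount d (ℓ + 1) ≤ crossPathCount d ℓ) ∧
    (4 ≤ d → ∀ ℓ : ℕ, 2 ≤ ℓ → ℓ ≠ d → crossPathCount d ℓ < crossPathCount d d) := by
  obtain ⟨n, rfl⟩ := Nat.exists_eq_add_of_le' (show 2 ≤ d by lia)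
  have count_eq := crossPathCount_eq_two_mul_evenChooseSum (n + 1)
  refine ⟨fun ℓ hℓ hℓd ↦ ?_, fun ℓ hdℓ ↦ ?_, fun hd4 ℓ hℓ hne ↦ ?_⟩
  · obtain ⟨m, rfl⟩ := Nat.exists_eq_add_of_le' hℓ
    have hm : m + 1 ≤ n := by lia
    rw [add_right_comm m 2 1, count_eq, count_eq]
    gcongr
    exact evenChooseSum.monotoneOn n (m.le_succ.trans hm) hm m.le_succ
  · obtain ⟨m, rfl⟩ := Nat.exists_eq_add_of_le' (show 2 ≤ ℓ by lia)
    have hm : n ≤ m := by lia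
    rw [add_right_comm m 2 1, count_eq, count_eq]
    gcongr
    exact evenChooseSum.antitoneOn n hm (hm.trans m.le_succ) m.le_succ
  · obtain ⟨m, rfl⟩ := Nat.exists_eq_add_of_le' hℓ
    rw [count_eq, count_eq]
    gcongr
    exact evenChooseSum.lt_peak (by lia) (by lia)
end

section
/- Fix integers d ≥ 4 and n ≥ d+1, and for 2 ≤ ℓ ≤ n−2 define N(ℓ) = ∑_{δ ≥ 1, 2δ ≤ d−1} 2·C(ℓ−2, δ−1)·C(n−ℓ−2, δ−1) + ∑_{δ ≥ 1, 2δ+1 ≤ d−1} ( C(ℓ−2, δ)·C(n−ℓ−2, δ−1) + C(ℓ−2, δ−1)·C(n−ℓ−2, δ) ). Then the sequence (N(ℓ))_{2 ≤ ℓ ≤ n−2} is symmetric, i.e. N(ℓ) = N(n−ℓ) for all 2 ≤ ℓ ≤ n−2, and unimodal, i.e. there exists m with 2 ≤ m ≤ n−2 such that N(ℓ) ≤ N(ℓ+1) for all 2 ≤ ℓ ≤ m−1 and N(ℓ) ≥ N(ℓ+1) for all m ≤ ℓ ≤ n−3. -/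
/-- The number of coherent monotone paths of length `ℓ` on the cyclic polytope
`cyc_d` with `n` vertices, in the direction `e₁`:
`N(ℓ) = ∑_{δ ≥ 1, 2δ ≤ d-1} 2·C(ℓ-2, δ-1)·C(n-ℓ-2, δ-1)
      + ∑_{δ ≥ 1, 2δ+1 ≤ d-1} (C(ℓ-2, δ)·C(n-ℓ-2, δ-1) + C(ℓ-2, δ-1)·C(n-ℓ-2, δ))`.
(Note `δ ≥ 1 ∧ 2δ ≤ d-1 ↔ δ ∈ Icc 1 ((d-1)/2)` and
`δ ≥ 1 ∧ 2δ+1 ≤ d-1 ↔ δ ∈ Icc 1 ((d-2)/2)`.) -/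
def cycCohCount (d n ℓ : ℕ) : ℕ :=
  (∑ δ ∈ Finset.Icc 1 ((d - 1) / 2),
      2 * Nat.choose (ℓ - 2) (δ - 1) * Nat.choose (n - ℓ - 2) (δ - 1)) +
  (∑ δ ∈ Finset.Icc 1 ((d - 2) / 2),
      (Nat.choose (ℓ - 2) δ * Nat.choose (n - ℓ - 2) (δ - 1) +
        Nat.choose (ℓ - 2) (δ - 1) * Nat.choose (n - ℓ - 2) δ)) 

/-!
Put `a = ℓ - 2` and `b = n - ℓ - 2`. Every summand of `N(ℓ)` is a symmetrized product
`C(a, i) * C(b, j) + C(a, j) * C(b, i)` with `|i - j| ≤ 1`, which is symmetric in `a` and `b`.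
By Pascal's rule, passing from `(a, c + 1)` to `(a + 1, c)` changes it by a sum of two `2 × 2`
minors of the matrix of binomial coefficients, and these are nonnegative when `a ≤ c`.
So every summand grows as `(a, b)` gets more balanced.
-/

theorem choose_mul_choose_le_choose_mul_choose {a c i j : ℕ} (hac : a ≤ c) (hij : i ≤ j) :
    a.choose j * c.choose i ≤ a.choose i * c.choose j := by
  induction j, hij using Nat.le_induction with
  | base => exact le_rfl
  | succ j _ ih =>
    refine Nat.le_of_mul_le_mul_right ?_ j.succ_pos
    calc a.choose (j + 1) * c.choose i * (j + 1)
        = a.choose (j + 1) * (j + 1) * c.choose i := Nat.mul_right_comm ..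
      _ = a.choose j * c.choose i * (a - j) := by
          rw [Nat.choose_succ_right_eq, Nat.mul_right_comm]
      _ ≤ a.choose i * c.choose j * (c - j) := Nat.mul_le_mul ih (Nat.sub_le_sub_right hac j)
      _ = a.choose i * c.choose (j + 1) * (j + 1) := by
          rw [Nat.mul_assoc, ← Nat.choose_succ_right_eq, ← Nat.mul_assoc]

/-- The symmetrized product of the binomial coefficients `C(a, i)` and `C(b, j)`; the summands of
`cycCohCount` have this form. It is twice the product when `i = j`. -/
def symmChoose (a b i j : ℕ) : ℕ :=
  a.choose i * b.choose j + a.choose j * b.choose i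

theorem symmChoose_comm (a b i j : ℕ) : symmChoose a b i j = symmChoose b a i j := by
  simp only [symmChoose, Nat.mul_comm, Nat.add_comm]

theorem symmChoose_succ_right_le_succ_left {a c i j : ℕ} (hac : a ≤ c) (hij : i ≤ j + 1)
    (hji : j ≤ i + 1) : symmChoose a (c + 1) i j ≤ symmChoose (a + 1) c i j := by
  unfold symmChoose
  rcases i with _ | i <;> rcases j with _ | j
  · simp only [Nat.choose_zero_right, le_refl]
  · obtain rfl : j = 0 := by omega
    simp only [Nat.choose_zero_right, zero_add, Nat.choose_one_right]
    omega
  · obtain rfl : i = 0 := by omega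
    simp only [Nat.choose_zero_right, zero_add, Nat.choose_one_right]
    omega
  · have minor_i := choose_mul_choose_le_choose_mul_choose hac (show i ≤ j + 1 by omega)
    have minor_j := choose_mul_choose_le_choose_mul_choose hac (show j ≤ i + 1 by omega)
    simp only [Nat.choose_succ_succ']
    linarith

theorem cycCohCount_eq_sum_symmChoose (d n ℓ : ℕ) :
    cycCohCount d n ℓ =
      ∑ δ ∈ Finset.Icc 1 ((d - 1) / 2), symmChoose (ℓ - 2) (n - ℓ - 2) (δ - 1) (δ - 1) +
      ∑ δ ∈ Finset.Icc 1 ((d - 2) / 2), symmChoose (ℓ - 2) (n - ℓ - 2) δ (δ - 1) := by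
  simp only [cycCohCount, symmChoose, two_mul, add_mul]

theorem cycCohCount_sub (d : ℕ) {n ℓ : ℕ} (hℓ : ℓ ≤ n) :
    cycCohCount d n (n - ℓ) = cycCohCount d n ℓ := by
  simp only [cycCohCount_eq_sum_symmChoose, Nat.sub_sub_self hℓ, symmChoose_comm (n - ℓ - 2)]

theorem cycCohCount_le_succ (d : ℕ) {n ℓ : ℕ} (hℓ : 2 ≤ ℓ) (hn : 2 * ℓ < n) :
    cycCohCount d n ℓ ≤ cycCohCount d n (ℓ + 1) := by
  obtain ⟨a, rfl⟩ := Nat.exists_eq_add_of_le' hℓ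
  obtain ⟨c, rfl⟩ : ∃ c, n = a + c + 5 := ⟨n - (a + 5), by omega⟩
  have hac : a ≤ c := by omega
  have hb : a + c + 5 - (a + 2) - 2 = c + 1 := by omega
  have hb' : a + c + 5 - (a + 2 + 1) - 2 = c := by omega
  have ha' : a + 2 + 1 - 2 = a + 1 := by omega
  simp only [cycCohCount_eq_sum_symmChoose, Nat.add_sub_cancel, hb, hb', ha']
  gcongr <;> exact symmChoose_succ_right_le_succ_left hac (by omega) (by omega)

theorem cycCohCount_succ_le (d : ℕ) {n ℓ : ℕ} (hℓ : ℓ + 3 ≤ n) (hn : n ≤ 2 * ℓ + 1) :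
    cycCohCount d n (ℓ + 1) ≤ cycCohCount d n ℓ :=
  calc cycCohCount d n (ℓ + 1)
      = cycCohCount d n (n - (ℓ + 1)) := (cycCohCount_sub d (by omega)).symm
    _ ≤ cycCohCount d n (n - (ℓ + 1) + 1) := cycCohCount_le_succ d (by omega) (by omega)
    _ = cycCohCount d n (n - ℓ) := by rw [show n - (ℓ + 1) + 1 = n - ℓ by omega]
    _ = cycCohCount d n ℓ := cycCohCount_sub d (by omega)

/-- the sequence `(N(ℓ))_{2 ≤ ℓ ≤ n-2}` is symmetric and unimodal. -/
theorem cycCohCount_symmetric_unimodal (d n : ℕ) (hd : 4 ≤ d) (hn : d + 1 ≤ n) :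
    (∀ ℓ : ℕ, 2 ≤ ℓ → ℓ ≤ n - 2 → cycCohCount d n ℓ = cycCohCount d n (n - ℓ)) ∧
    (∃ m : ℕ, 2 ≤ m ∧ m ≤ n - 2 ∧
      (∀ ℓ : ℕ, 2 ≤ ℓ → ℓ ≤ m - 1 → cycCohCount d n ℓ ≤ cycCohCount d n (ℓ + 1)) ∧
      (∀ ℓ : ℕ, m ≤ ℓ → ℓ ≤ n - 3 → cycCohCount d n (ℓ + 1) ≤ cycCohCount d n ℓ)) := by
  refine ⟨fun ℓ _ hℓ => (cycCohCount_sub d (by omega)).symm, n / 2, by omega, by omega, ?_, ?_⟩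
  · exact fun ℓ h2 hm => cycCohCount_le_succ d h2 (by omega)
  · exact fun ℓ hm h3 => cycCohCount_succ_le d (by omega) (by omega)
end

section
/- Let p be a nonzero polynomial with real coefficients all of whose roots are real, i.e. the multiset of its roots in ℝ has cardinality equal to the degree of p. Then the polynomial q = X · (X · p)′ (the product of X with the derivative of X·p) is nonzero and all of its roots are real: the multiset of real roots of q has cardinality equal to the degree of q. -/
open Polynomial

theorem derivative_X_mul_ne_zero {R : Type*} [Semiring R] [IsAddTorsionFree R]
    {p : R[X]} (hp : p ≠ 0) : derivative (X * p) ≠ 0 := by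
  have : Nontrivial R := Nontrivial.of_polynomial_ne hp
  rw [derivative_ne_zero, natDegree_X_mul hp]
  exact p.natDegree.succ_ne_zero

-- By Rolle, counting multiplicities, the derivative of a real-rooted polynomial of degree `n` has
-- at least `n - 1` real roots, which is also the most its degree allows.
theorem splits_derivative_of_splits {f : ℝ[X]} (hf : f.Splits) : (derivative f).Splits := by
  rw [splits_iff_card_roots] at hf ⊢
  refine (card_roots' _).antisymm ?_
  calc (derivative f).natDegree
      ≤ f.natDegree - 1 := natDegree_derivative_le f
    _ = Multiset.card f.roots - 1 := by rw [hf]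
    _ ≤ Multiset.card (derivative f).roots := Nat.sub_le_of_le_add (card_roots_le_derivative f)

/-- if `p` is a nonzero real polynomial all of whose roots are real
(i.e. the multiset of its real roots has cardinality `natDegree p`), then
`q = X · (X·p)'` is nonzero and all of its roots are real. -/
theorem realRooted_prism_transform (p : ℝ[X]) (hp : p ≠ 0)
    (hroots : (Multiset.card p.roots) = p.natDegree) :
    X * derivative (X * p) ≠ 0 ∧
      Multiset.card (X * derivative (X * p)).roots =
        (X * derivative (X * p)).natDegree := by
  have hp_splits : p.Splits := splits_iff_card_roots.mpr hroots
  have hderiv_splits : (derivative (X * p)).Splits :=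
    splits_derivative_of_splits (Splits.X.mul hp_splits)
  exact ⟨mul_ne_zero X_ne_zero (derivative_X_mul_ne_zero hp),
    splits_iff_card_roots.mp (Splits.X.mul hderiv_splits)⟩
end

section
/- Fix an integer d ≥ 4 and set β = d/2 − 2 (so β ≥ 0). For ε ∈ (0, 1/2) let m(ε) be the largest natural number k for which there exist points p₁, …, p_k ∈ 𝔻 ∖ {0} such that μ_β(C_{p_i}) = ε for every i and the caps C_{p₁}, …, C_{p_k} are pairwise disjoint. Then there exists a constant c > 0 such that m(ε)·ε^{1/(d−1)} tends to c as ε → 0 from the right. -/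
open MeasureTheory

/-- The `β`-distribution on the closed unit disk of `ℝ²`: the measure with density
`x ↦ ((β+1)/π)·(1-‖x‖²)^β` on the disk (and `0` outside) w.r.t. Lebesgue measure. -/
noncomputable def betaMeasure (β : ℝ) : Measure (EuclideanSpace ℝ (Fin 2)) :=
  volume.withDensity fun x =>
    ENNReal.ofReal (if ‖x‖ ≤ 1 then (β + 1) / Real.pi * (1 - ‖x‖ ^ 2) ^ β else 0)

/-- The cap of the unit disk induced by a point `p`: `C_p = {x ∈ 𝔻 : ⟨x - p, p⟩ ≥ 0}`. -/
def diskCap (p : EuclideanSpace ℝ (Fin 2)) : Set (EuclideanSpace ℝ (Fin 2)) :=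
  {x | ‖x‖ ≤ 1 ∧ (0 : ℝ) ≤ inner ℝ (x - p) p}

/-- `mEps β ε`: the maximal number of pairwise disjoint `ε`-caps, i.e. the largest `k`
for which there exist `p₁, …, p_k ∈ 𝔻 ∖ {0}` with `μ_β(C_{p_i}) = ε` and the caps
pairwise disjoint. -/
noncomputable def mEps (β ε : ℝ) : ℕ :=
  sSup {k : ℕ | ∃ p : Fin k → EuclideanSpace ℝ (Fin 2),
    (∀ i, p i ≠ 0 ∧ ‖p i‖ ≤ 1 ∧ betaMeasure β (diskCap (p i)) = ENNReal.ofReal ε) ∧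
    Pairwise fun i j => Disjoint (diskCap (p i)) (diskCap (p j))}

/-!
A cap whose boundary line is at distance `cos α` from the origin has half-angle `α`. Slicing it
orthogonally to its axis and substituting `s = cos φ` shows that its measure is
`V(α) = C ∫₀^α sin^(2β+2)`, so that `V(α) ~ C α^(2β+3) / (2β+3)` as `α → 0⁺`, and `V` is strictly
increasing: all `ε`-caps have the same half-angle `α`. Disjoint caps cut disjoint arcs of length
`2α` out of the circle, so at most `π/α` of them fit, and `k` equispaced caps are disjoint as soon
as `kα < π`. Hence `m(V(α)) α → π`, and `α` is eliminated in favour of `ε = V(α)`.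
-/

open Filter Set
open scoped ENNReal Real RealInnerProductSpace Topology

/-! ### Integration -/

lemma lintegral_eq_lintegral_mul_add {a : ℝ} (ha : a ≠ 0) (b : ℝ) (f : ℝ → ℝ≥0∞) :
    ∫⁻ y, f y = ENNReal.ofReal |a| * ∫⁻ y, f (a * y + b) := by
  have hderiv (y : ℝ) : HasDerivWithinAt (fun y ↦ a * y + b) a univ y := by
    simpa only [mul_one] using (((hasDerivAt_id' y).const_mul a).add_const b).hasDerivWithinAt
  have himage : (fun y ↦ a * y + b) '' univ = univ :=
    image_univ_of_surjective fun z ↦ ⟨(z - b) / a, by field_simp; ring⟩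
  have hinj : Function.Injective fun y ↦ a * y + b := fun y z h ↦
    mul_left_cancel₀ ha (add_right_cancel h)
  rw [← lintegral_const_mul' _ _ ENNReal.ofReal_ne_top]
  simpa [himage] using
    lintegral_image_eq_lintegral_abs_deriv_mul .univ (fun y _ ↦ hderiv y) hinj.injOn f

lemma setLIntegral_Ioo_cos_one {α : ℝ} (hα : α ∈ Icc 0 π) (f : ℝ → ℝ≥0∞) :
    ∫⁻ s in Ioo (Real.cos α) 1, f s =
      ∫⁻ φ in Ioo 0 α, ENNReal.ofReal (Real.sin φ) * f (Real.cos φ) := by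
  have hsub : Ioo 0 α ⊆ Icc 0 π := fun φ hφ ↦ ⟨hφ.1.le, hφ.2.le.trans hα.2⟩
  have himage : Real.cos '' Ioo 0 α = Ioo (Real.cos α) 1 := by
    refine Subset.antisymm ?_ ?_
    · rintro _ ⟨φ, hφ, rfl⟩
      refine ⟨Real.strictAntiOn_cos (hsub hφ) hα hφ.2, ?_⟩
      simpa using Real.strictAntiOn_cos ⟨le_rfl, Real.pi_nonneg⟩ (hsub hφ) hφ.1
    · simpa using intermediate_value_Ioo' hα.1 Real.continuous_cos.continuousOn
  rw [← himage, lintegral_image_eq_lintegral_abs_deriv_mul measurableSet_Ioo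
    (fun φ _ ↦ (Real.hasDerivAt_cos φ).hasDerivWithinAt) (Real.injOn_cos.mono hsub)]
  refine setLIntegral_congr_fun measurableSet_Ioo fun φ hφ ↦ ?_
  simp only [abs_neg, abs_of_nonneg (Real.sin_nonneg_of_mem_Icc (hsub hφ))]

lemma setLIntegral_Ioo_cos_one_rpow {q : ℝ} (hq : 0 ≤ 2 * q + 1) {α : ℝ} (hα : α ∈ Icc 0 π) :
    ∫⁻ s in Ioo (Real.cos α) 1, ENNReal.ofReal ((1 - s ^ 2) ^ q) =
      ENNReal.ofReal (∫ φ in 0..α, Real.sin φ ^ (2 * q + 1)) := by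
  have hsin {φ : ℝ} (hφ : φ ∈ Ioo 0 α) : 0 < Real.sin φ :=
    Real.sin_pos_of_pos_of_lt_pi hφ.1 (hφ.2.trans_le hα.2)
  have hcont : Continuous fun φ ↦ Real.sin φ ^ (2 * q + 1) :=
    Real.continuous_sin.rpow_const fun _ ↦ Or.inr hq
  rw [setLIntegral_Ioo_cos_one hα, intervalIntegral.integral_of_le hα.1,
    integral_Ioc_eq_integral_Ioo, ofReal_integral_eq_lintegral_ofReal
      (hcont.integrableOn_Icc.mono_set Ioo_subset_Icc_self)
      (ae_restrict_of_forall_mem measurableSet_Ioo fun φ hφ ↦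
        (Real.rpow_pos_of_pos (hsin hφ) _).le)]
  refine setLIntegral_congr_fun measurableSet_Ioo fun φ hφ ↦ ?_
  simp only [← Real.sin_sq]
  rw [← ENNReal.ofReal_mul (hsin hφ).le, add_comm, Real.rpow_add (hsin hφ), Real.rpow_one,
    Real.rpow_mul (hsin hφ).le, Real.rpow_two]

lemma lintegral_inner_norm_sq {E : Type*} [NormedAddCommGroup E] [InnerProductSpace ℝ E]
    [FiniteDimensional ℝ E] [MeasurableSpace E] [BorelSpace E]
    (hE : Module.finrank ℝ E = 2) {u : E} (hu : ‖u‖ = 1) {f : ℝ × ℝ → ℝ≥0∞}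
    (hf : Measurable f) :
    ∫⁻ x : E, f (⟪x, u⟫, ‖x‖ ^ 2) = ∫⁻ s, ∫⁻ y, f (s, s ^ 2 + y ^ 2) := by
  have horth : Orthonormal ℝ (({0} : Set (Fin 2)).domRestrict fun _ ↦ u) :=
    ⟨fun _ ↦ hu, fun i j hij ↦ absurd (Subsingleton.elim i j) hij⟩
  obtain ⟨b, hb⟩ := horth.exists_orthonormalBasis_extension_of_card_eq (by simpa using hE)
  have hfst (x : E) : ⟪x, u⟫ = b.repr x 0 := by
    rw [b.repr_apply_apply, hb 0 rfl, real_inner_comm]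
  have hnorm (x : E) : ‖x‖ ^ 2 = b.repr x 0 ^ 2 + b.repr x 1 ^ 2 := by
    rw [← b.repr.norm_map x, EuclideanSpace.real_norm_sq_eq, Fin.sum_univ_two]
  have hcoord : MeasurePreserving fun x : E ↦ (b.repr x 0, b.repr x 1) :=
    (volume_preserving_finTwoArrow ℝ).comp
      ((EuclideanSpace.volume_preserving_symm_measurableEquiv_toLp (Fin 2)).comp
        b.measurePreserving_repr)
  have hf' : Measurable fun z : ℝ × ℝ ↦ f (z.1, z.1 ^ 2 + z.2 ^ 2) := by fun_prop
  simp_rw [hnorm, hfst]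
  rw [hcoord.lintegral_comp hf', Measure.volume_eq_prod, lintegral_prod _ hf'.aemeasurable]

/-! ### The measure of a cap -/

/-- The unnormalised density of the `β`-distribution as a function of `t = ‖x‖²`. It vanishes
on the unit circle, which is a null set. -/
noncomputable def betaWeight (β t : ℝ) : ℝ≥0∞ :=
  (Iio 1).indicator (fun t ↦ ENNReal.ofReal ((1 - t) ^ β)) t

lemma betaWeight_of_lt {β t : ℝ} (ht : t < 1) :
    betaWeight β t = ENNReal.ofReal ((1 - t) ^ β) :=
  indicator_of_mem (s := Iio 1) ht _

lemma betaWeight_of_le {β t : ℝ} (ht : 1 ≤ t) : betaWeight β t = 0 :=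
  indicator_of_notMem (s := Iio 1) (not_lt.2 ht) _

@[fun_prop]
lemma measurable_betaWeight (β : ℝ) : Measurable (betaWeight β) :=
  Measurable.indicator (by fun_prop) measurableSet_Iio

lemma betaWeight_one_sub_mul (β : ℝ) {r : ℝ} (hr : 0 < r) (t : ℝ) :
    betaWeight β (1 - r * (1 - t)) = ENNReal.ofReal (r ^ β) * betaWeight β t := by
  rcases lt_or_ge t 1 with ht | ht
  · rw [betaWeight_of_lt ht, betaWeight_of_lt (by nlinarith), sub_sub_cancel,
      Real.mul_rpow hr.le (by linarith), ENNReal.ofReal_mul (by positivity)]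
  · rw [betaWeight_of_le ht, betaWeight_of_le (by nlinarith), mul_zero]

lemma betaWeight_sq_two_mul_sub_one {β : ℝ} (hβ : -1 < β) (u : ℝ) :
    betaWeight β ((2 * u - 1) ^ 2) =
      ENNReal.ofReal (4 ^ β * ProbabilityTheory.beta (β + 1) (β + 1)) *
        ProbabilityTheory.betaPDF (β + 1) (β + 1) u := by
  have hB : 0 < ProbabilityTheory.beta (β + 1) (β + 1) :=
    ProbabilityTheory.beta_pos (by linarith) (by linarith)
  by_cases hu : 0 < u ∧ u < 1
  · obtain ⟨hu0, hu1⟩ := hu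
    have hu1' : 0 < 1 - u := sub_pos.2 hu1
    have hfactor : 1 - (2 * u - 1) ^ 2 = 4 * u * (1 - u) := by ring
    rw [betaWeight_of_lt (by nlinarith), ProbabilityTheory.betaPDF_of_pos_lt_one hu0 hu1,
      ← ENNReal.ofReal_mul (by positivity), hfactor, Real.mul_rpow (by positivity) hu1'.le,
      Real.mul_rpow (by positivity) hu0.le, add_sub_cancel_right]
    congr 1
    field_simp
  · have hu' : 1 ≤ (2 * u - 1) ^ 2 := by
      rw [not_and_or, not_lt, not_lt] at hu
      rcases hu with hu | hu <;> nlinarith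
    rw [betaWeight_of_le hu', ProbabilityTheory.betaPDF_eq, if_neg hu, ENNReal.ofReal_zero,
      mul_zero]

lemma lintegral_betaWeight_sq {β : ℝ} (hβ : -1 < β) :
    ∫⁻ y, betaWeight β (y ^ 2) =
      ENNReal.ofReal (2 * 4 ^ β * ProbabilityTheory.beta (β + 1) (β + 1)) := by
  rw [lintegral_eq_lintegral_mul_add two_ne_zero (-1)]
  simp_rw [← sub_eq_add_neg, betaWeight_sq_two_mul_sub_one hβ]
  rw [lintegral_const_mul' _ _ ENNReal.ofReal_ne_top,
    ProbabilityTheory.lintegral_betaPDF_eq_one (by linarith) (by linarith), mul_one, abs_two,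
    ← ENNReal.ofReal_mul zero_le_two, mul_assoc]

lemma lintegral_betaWeight_sq_add_sq (β : ℝ) {s : ℝ} (hs : s ^ 2 < 1) :
    ∫⁻ y, betaWeight β (s ^ 2 + y ^ 2) =
      ENNReal.ofReal ((1 - s ^ 2) ^ (β + 1 / 2)) * ∫⁻ y, betaWeight β (y ^ 2) := by
  have hr : 0 < 1 - s ^ 2 := sub_pos.2 hs
  have hscale (y : ℝ) : betaWeight β (s ^ 2 + (√(1 - s ^ 2) * y + 0) ^ 2) =
      ENNReal.ofReal ((1 - s ^ 2) ^ β) * betaWeight β (y ^ 2) := by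
    rw [← betaWeight_one_sub_mul β hr, add_zero, mul_pow, Real.sq_sqrt hr.le]
    congr 1
    ring
  rw [lintegral_eq_lintegral_mul_add (Real.sqrt_pos.2 hr).ne' 0]
  simp_rw [hscale]
  rw [lintegral_const_mul' _ _ ENNReal.ofReal_ne_top, ← mul_assoc, abs_of_nonneg (by positivity),
    ← ENNReal.ofReal_mul (by positivity), Real.sqrt_eq_rpow, ← Real.rpow_add hr, add_comm]

lemma betaMeasure_eq_withDensity_betaWeight (β : ℝ) :
    betaMeasure β = volume.withDensity fun x ↦
      ENNReal.ofReal ((β + 1) / π) * betaWeight β (‖x‖ ^ 2) := by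
  have hsphere : ∀ᵐ x : EuclideanSpace ℝ (Fin 2), ‖x‖ ≠ 1 := by
    simpa [ae_iff, Metric.sphere] using
      Measure.addHaar_sphere volume (0 : EuclideanSpace ℝ (Fin 2)) 1
  refine withDensity_congr_ae ?_
  filter_upwards [hsphere] with x hx
  rcases hx.lt_or_gt with hx | hx
  · have hx2 : ‖x‖ ^ 2 < 1 := pow_lt_one₀ (norm_nonneg x) hx two_ne_zero
    rw [if_pos hx.le, betaWeight_of_lt hx2,
      ENNReal.ofReal_mul' (Real.rpow_nonneg (sub_nonneg.2 hx2.le) β)]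
  · rw [if_neg hx.not_ge, betaWeight_of_le (by nlinarith), mul_zero, ENNReal.ofReal_zero]

lemma mem_diskCap_smul {t : ℝ} (ht : 0 < t) {u : EuclideanSpace ℝ (Fin 2)} (hu : ‖u‖ = 1)
    (x : EuclideanSpace ℝ (Fin 2)) : x ∈ diskCap (t • u) ↔ ‖x‖ ≤ 1 ∧ t ≤ ⟪x, u⟫ := by
  refine and_congr_right fun _ ↦ ?_
  rw [inner_sub_left, real_inner_smul_left, real_inner_smul_right, real_inner_smul_right,
    real_inner_self_eq_norm_sq, hu, one_pow, mul_one, ← mul_sub, mul_nonneg_iff_of_pos_left ht,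
    sub_nonneg]

lemma measurableSet_diskCap (p : EuclideanSpace ℝ (Fin 2)) : MeasurableSet (diskCap p) := by
  have hclosed : IsClosed ({x | ‖x‖ ≤ 1} ∩ {x : EuclideanSpace ℝ (Fin 2) | 0 ≤ ⟪x - p, p⟫}) :=
    (isClosed_le (by fun_prop) (by fun_prop)).inter (isClosed_le (by fun_prop) (by fun_prop))
  exact hclosed.measurableSet

lemma betaMeasure_diskCap_smul (β : ℝ) {t : ℝ} (ht : 0 < t)
    {u : EuclideanSpace ℝ (Fin 2)} (hu : ‖u‖ = 1) :
    betaMeasure β (diskCap (t • u)) = ENNReal.ofReal ((β + 1) / π) *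
      ∫⁻ s in Ioi t, ∫⁻ y, betaWeight β (s ^ 2 + y ^ 2) := by
  let f : ℝ × ℝ → ℝ≥0∞ := fun z ↦ (Ici t ×ˢ univ).indicator (fun z ↦ betaWeight β z.2) z
  have hf : Measurable f := Measurable.indicator (by fun_prop) (measurableSet_Ici.prod .univ)
  have hcap (x : EuclideanSpace ℝ (Fin 2)) :
      (diskCap (t • u)).indicator (fun x ↦ betaWeight β (‖x‖ ^ 2)) x = f (⟪x, u⟫, ‖x‖ ^ 2) := by
    by_cases hx : ‖x‖ ≤ 1
    · simp [f, indicator, mem_diskCap_smul ht hu, hx]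
    · simp [f, indicator, betaWeight_of_le (one_le_pow₀ (not_le.1 hx).le)]
  have hslice (s : ℝ) : ∫⁻ y, f (s, s ^ 2 + y ^ 2) =
      (Ici t).indicator (fun s ↦ ∫⁻ y, betaWeight β (s ^ 2 + y ^ 2)) s := by
    by_cases hs : t ≤ s <;> simp [f, indicator, hs]
  rw [betaMeasure_eq_withDensity_betaWeight, withDensity_apply _ (measurableSet_diskCap _),
    lintegral_const_mul' _ _ ENNReal.ofReal_ne_top, ← lintegral_indicator (measurableSet_diskCap _)]
  simp_rw [hcap]
  rw [lintegral_inner_norm_sq (by simp) hu hf]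
  simp_rw [hslice]
  rw [lintegral_indicator measurableSet_Ici, setLIntegral_congr Ioi_ae_eq_Ici.symm]

lemma setLIntegral_Ioi_betaWeight (β : ℝ) {t : ℝ} (ht : 0 ≤ t) :
    ∫⁻ s in Ioi t, ∫⁻ y, betaWeight β (s ^ 2 + y ^ 2) =
      (∫⁻ s in Ioo t 1, ENNReal.ofReal ((1 - s ^ 2) ^ (β + 1 / 2))) *
        ∫⁻ y, betaWeight β (y ^ 2) := by
  have hsupport : (Function.support fun s ↦ ∫⁻ y, betaWeight β (s ^ 2 + y ^ 2)) ⊆ Iio 1 := by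
    refine Function.support_subset_iff'.2 fun s hs ↦ ?_
    have hs1 : 1 ≤ s := not_lt.1 hs
    have hzero (y : ℝ) : betaWeight β (s ^ 2 + y ^ 2) = 0 :=
      betaWeight_of_le (by nlinarith [sq_nonneg y])
    simp [hzero]
  rw [← setLIntegral_eq_of_support_subset hsupport, Measure.restrict_restrict measurableSet_Iio,
    Iio_inter_Ioi, ← lintegral_mul_const _ (by fun_prop)]
  refine setLIntegral_congr_fun measurableSet_Ioo fun s hs ↦ ?_
  exact lintegral_betaWeight_sq_add_sq β (by nlinarith [hs.1, hs.2])

/-- The factor by which `∫ φ in 0..α, sin φ ^ (2β+2)` is multiplied to give the `μ_β`-measure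
of a cap of half-angle `α`. -/
noncomputable def capCoeff (β : ℝ) : ℝ :=
  (β + 1) / π * (2 * 4 ^ β * ProbabilityTheory.beta (β + 1) (β + 1))

/-- The `μ_β`-measure of a cap of half-angle `α`, that is, of a cap whose boundary line is at
distance `cos α` from the origin. -/
noncomputable def capVolume (β α : ℝ) : ℝ :=
  capCoeff β * ∫ φ in 0..α, Real.sin φ ^ (2 * β + 2)

lemma capCoeff_pos {β : ℝ} (hβ : -1 < β) : 0 < capCoeff β := by
  have hβ' : 0 < β + 1 := by linarith
  have := ProbabilityTheory.beta_pos hβ' hβ'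
  unfold capCoeff
  positivity

lemma cos_pos_of_mem_Ico {α : ℝ} (hα : α ∈ Ico 0 (π / 2)) : 0 < Real.cos α :=
  Real.cos_pos_of_mem_Ioo ⟨by linarith [hα.1, Real.pi_pos], hα.2⟩

lemma betaMeasure_diskCap_cos_smul {β : ℝ} (hβ : -1 < β) {α : ℝ} (hα : α ∈ Ico 0 (π / 2))
    {u : EuclideanSpace ℝ (Fin 2)} (hu : ‖u‖ = 1) :
    betaMeasure β (diskCap (Real.cos α • u)) = ENNReal.ofReal (capVolume β α) := by
  have hcos : 0 < Real.cos α := cos_pos_of_mem_Ico hα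
  have hc : 0 ≤ (β + 1) / π := div_nonneg (by linarith) Real.pi_nonneg
  have hα' : α ∈ Icc 0 π := ⟨hα.1, by linarith [hα.2, Real.pi_pos]⟩
  have hexp : 2 * (β + 1 / 2) + 1 = 2 * β + 2 := by ring
  rw [betaMeasure_diskCap_smul β hcos hu, setLIntegral_Ioi_betaWeight β hcos.le,
    setLIntegral_Ioo_cos_one_rpow (by linarith) hα', lintegral_betaWeight_sq hβ, hexp,
    mul_left_comm, ← ENNReal.ofReal_mul hc, ← capCoeff, mul_comm,
    ← ENNReal.ofReal_mul (capCoeff_pos hβ).le, capVolume]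

lemma hasDerivAt_integral_sin_rpow {r : ℝ} (hr : 0 ≤ r) (α : ℝ) :
    HasDerivAt (fun α ↦ ∫ φ in 0..α, Real.sin φ ^ r) (Real.sin α ^ r) α := by
  have hcont : Continuous fun φ ↦ Real.sin φ ^ r :=
    Real.continuous_sin.rpow_const fun _ ↦ Or.inr hr
  exact hcont.integral_hasStrictDerivAt 0 α |>.hasDerivAt

lemma hasDerivAt_capVolume {β : ℝ} (hβ : -1 ≤ β) (α : ℝ) :
    HasDerivAt (capVolume β) (capCoeff β * Real.sin α ^ (2 * β + 2)) α :=
  (hasDerivAt_integral_sin_rpow (by linarith) α).const_mul _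

lemma continuous_capVolume {β : ℝ} (hβ : -1 ≤ β) : Continuous (capVolume β) :=
  continuous_iff_continuousAt.2 fun α ↦ (hasDerivAt_capVolume hβ α).continuousAt

@[simp]
lemma capVolume_zero (β : ℝ) : capVolume β 0 = 0 := by simp [capVolume]

lemma strictMonoOn_capVolume {β : ℝ} (hβ : -1 < β) : StrictMonoOn (capVolume β) (Icc 0 π) := by
  refine strictMonoOn_of_deriv_pos (convex_Icc _ _) (continuous_capVolume hβ.le).continuousOn ?_
  intro α hα
  rw [interior_Icc] at hα
  rw [(hasDerivAt_capVolume hβ.le α).deriv]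
  exact mul_pos (capCoeff_pos hβ) (Real.rpow_pos_of_pos (Real.sin_pos_of_mem_Ioo hα) _)

lemma capVolume_pos {β : ℝ} (hβ : -1 < β) {α : ℝ} (hα : α ∈ Ioc 0 π) : 0 < capVolume β α := by
  rw [← capVolume_zero β]
  exact strictMonoOn_capVolume hβ ⟨le_rfl, Real.pi_nonneg⟩ (Ioc_subset_Icc_self hα) hα.1

lemma capVolume_nonneg {β : ℝ} (hβ : -1 < β) {α : ℝ} (hα : α ∈ Icc 0 π) : 0 ≤ capVolume β α := by
  rw [← capVolume_zero β]
  exact (strictMonoOn_capVolume hβ).monotoneOn ⟨le_rfl, Real.pi_nonneg⟩ hα hα.1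

lemma tendsto_sin_div_self_nhdsGT : Tendsto (fun x ↦ Real.sin x / x) (𝓝[>] 0) (𝓝 1) := by
  have hslope := hasDerivAt_iff_tendsto_slope.1 (Real.hasDerivAt_sin 0)
  rw [Real.cos_zero] at hslope
  refine (hslope.mono_left (nhdsGT_le_nhdsNE 0)).congr fun x ↦ ?_
  simp [slope_def_field]

lemma tendsto_integral_sin_rpow_div_rpow {r : ℝ} (hr : 0 ≤ r) :
    Tendsto (fun α ↦ (∫ φ in 0..α, Real.sin φ ^ r) / α ^ (r + 1)) (𝓝[>] 0)
      (𝓝 (1 / (r + 1))) := by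
  have hr' : 0 < r + 1 := by linarith
  refine HasDerivAt.lhopital_zero_nhdsGT (f' := fun α ↦ Real.sin α ^ r)
    (g' := fun α ↦ (r + 1) * α ^ r) ?_ ?_ ?_ ?_ ?_ ?_
  · exact .of_forall (hasDerivAt_integral_sin_rpow hr)
  · filter_upwards [self_mem_nhdsWithin] with α (hα : 0 < α)
    simpa using Real.hasDerivAt_rpow_const (p := r + 1) (Or.inl hα.ne')
  · filter_upwards [self_mem_nhdsWithin] with α (hα : 0 < α)
    positivity
  · simpa using (hasDerivAt_integral_sin_rpow hr 0).continuousAt.tendsto.mono_left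
      nhdsWithin_le_nhds
  · simpa [Real.zero_rpow hr'.ne'] using
      (Real.continuousAt_rpow_const 0 (r + 1) (Or.inr hr'.le)).tendsto.mono_left nhdsWithin_le_nhds
  · have hquot := (tendsto_sin_div_self_nhdsGT.rpow_const (Or.inr hr)).div_const (r + 1)
    rw [Real.one_rpow] at hquot
    refine hquot.congr' ?_
    filter_upwards [Ioo_mem_nhdsGT Real.pi_pos] with α hα
    rw [Real.div_rpow (Real.sin_pos_of_mem_Ioo hα).le hα.1.le, div_div, mul_comm]

lemma tendsto_capVolume_div_rpow {β : ℝ} (hβ : -1 ≤ β) :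
    Tendsto (fun α ↦ capVolume β α / α ^ (2 * β + 3)) (𝓝[>] 0)
      (𝓝 (capCoeff β / (2 * β + 3))) := by
  have hlim := (tendsto_integral_sin_rpow_div_rpow (r := 2 * β + 2) (by linarith)).const_mul
    (capCoeff β)
  have hexp : 2 * β + 2 + 1 = 2 * β + 3 := by ring
  rw [hexp, mul_one_div] at hlim
  exact hlim.congr fun α ↦ (mul_div_assoc _ _ _).symm

/-! ### Packing caps -/

/-- The unit vector in direction `θ`. -/
noncomputable def unitVec (θ : ℝ) : EuclideanSpace ℝ (Fin 2) := !₂[Real.cos θ, Real.sin θ]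

@[simp]
lemma norm_unitVec (θ : ℝ) : ‖unitVec θ‖ = 1 := by
  simp [EuclideanSpace.norm_eq, unitVec, Fin.sum_univ_two]

lemma inner_unitVec (θ φ : ℝ) : ⟪unitVec θ, unitVec φ⟫ = Real.cos (θ - φ) := by
  simp [unitVec, PiLp.inner_apply, Fin.sum_univ_two, Real.cos_sub, mul_comm]

lemma norm_unitVec_add_unitVec (θ φ : ℝ) :
    ‖unitVec θ + unitVec φ‖ = 2 * |Real.cos ((θ - φ) / 2)| := by
  rw [← abs_two (α := ℝ), ← abs_mul, ← Real.sqrt_sq_eq_abs, ← Real.sqrt_sq (norm_nonneg _),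
    norm_add_sq_real, inner_unitVec, norm_unitVec, norm_unitVec, mul_pow, Real.cos_sq]
  ring_nf

lemma exists_eq_norm_smul_unitVec (p : EuclideanSpace ℝ (Fin 2)) :
    ∃ θ : ℝ, p = ‖p‖ • unitVec θ := by
  have hnorm : ‖(⟨p 0, p 1⟩ : ℂ)‖ = ‖p‖ := by
    simp [EuclideanSpace.norm_eq, Complex.norm_eq_sqrt_sq_add_sq, Fin.sum_univ_two]
  refine ⟨Complex.arg ⟨p 0, p 1⟩, ?_⟩
  ext i
  fin_cases i
  · simpa [unitVec, hnorm] using (Complex.norm_mul_cos_arg ⟨p 0, p 1⟩).symm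
  · simpa [unitVec, hnorm] using (Complex.norm_mul_sin_arg ⟨p 0, p 1⟩).symm

lemma exists_eq_cos_smul_unitVec {p : EuclideanSpace ℝ (Fin 2)} (hp : p ≠ 0) (hp1 : ‖p‖ ≤ 1) :
    ∃ α ∈ Ico 0 (π / 2), ∃ θ : ℝ, p = Real.cos α • unitVec θ := by
  obtain ⟨θ, hθ⟩ := exists_eq_norm_smul_unitVec p
  refine ⟨Real.arccos ‖p‖, ⟨Real.arccos_nonneg _, ?_⟩, θ, ?_⟩
  · exact Real.arccos_lt_pi_div_two.2 (norm_pos_iff.2 hp)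
  · rwa [Real.cos_arccos (by linarith [norm_nonneg p]) hp1]

lemma disjoint_diskCap_smul {t : ℝ} (ht : 0 < t) {u v : EuclideanSpace ℝ (Fin 2)}
    (hu : ‖u‖ = 1) (hv : ‖v‖ = 1) (huv : ‖u + v‖ < 2 * t) :
    Disjoint (diskCap (t • u)) (diskCap (t • v)) := by
  rw [Set.disjoint_left]
  intro x hxu hxv
  rw [mem_diskCap_smul ht hu] at hxu
  rw [mem_diskCap_smul ht hv] at hxv
  have : 2 * t ≤ ‖u + v‖ :=
    calc 2 * t ≤ ⟪x, u⟫ + ⟪x, v⟫ := by linarith [hxu.2, hxv.2]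
      _ = ⟪x, u + v⟫ := (inner_add_right _ _ _).symm
      _ ≤ ‖x‖ * ‖u + v‖ := real_inner_le_norm _ _
      _ ≤ ‖u + v‖ := mul_le_of_le_one_left (norm_nonneg _) hxu.1
  exact huv.not_ge this

lemma cos_norm_addCircle (x : ℝ) : Real.cos ‖(x : AddCircle (2 * π))‖ = Real.cos x := by
  rw [AddCircle.norm_eq, Real.cos_abs, Real.cos_sub_int_mul_two_pi]

lemma unitVec_mem_diskCap {α : ℝ} (hα : α ∈ Ico 0 (π / 2)) {θ φ : ℝ}
    (hφ : (φ : AddCircle (2 * π)) ∈ Metric.closedBall (θ : AddCircle (2 * π)) α) :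
    unitVec φ ∈ diskCap (Real.cos α • unitVec θ) := by
  rw [Metric.mem_closedBall, dist_eq_norm, ← AddCircle.coe_sub] at hφ
  rw [mem_diskCap_smul (cos_pos_of_mem_Ico hα) (norm_unitVec θ), inner_unitVec,
    ← cos_norm_addCircle (φ - θ)]
  exact ⟨(norm_unitVec φ).le,
    Real.cos_le_cos_of_nonneg_of_le_pi (norm_nonneg _) (by linarith [hα.2, Real.pi_pos]) hφ⟩

lemma card_mul_le_of_pairwise_disjoint_closedBall {T : ℝ} [Fact (0 < T)] {ι : Type*} [Fintype ι]
    {r : ℝ} (hr : 2 * r ≤ T) {x : ι → AddCircle T}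
    (hx : Pairwise fun i j ↦ Disjoint (Metric.closedBall (x i) r) (Metric.closedBall (x j) r)) :
    Fintype.card ι * (2 * r) ≤ T := by
  have hT : 0 < T := Fact.out
  have hvol : volume (⋃ i, Metric.closedBall (x i) r) ≤ ENNReal.ofReal T :=
    (measure_mono (subset_univ _)).trans_eq (AddCircle.measure_univ T)
  rw [measure_iUnion hx fun _ ↦ Metric.isClosed_closedBall.measurableSet, tsum_fintype] at hvol
  simp only [AddCircle.volume_closedBall, min_eq_right hr, Finset.sum_const, Finset.card_univ,
    nsmul_eq_mul] at hvol
  rwa [← ENNReal.ofReal_natCast, ← ENNReal.ofReal_mul (by positivity),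
    ENNReal.ofReal_le_ofReal_iff hT.le] at hvol

lemma card_mul_le_pi_of_pairwise_disjoint_diskCap {α : ℝ} (hα : α ∈ Ico 0 (π / 2))
    {ι : Type*} [Fintype ι] {θ : ι → ℝ}
    (hθ : Pairwise fun i j ↦
      Disjoint (diskCap (Real.cos α • unitVec (θ i))) (diskCap (Real.cos α • unitVec (θ j)))) :
    Fintype.card ι * α ≤ π := by
  have : Fact (0 < 2 * π) := ⟨Real.two_pi_pos⟩
  have harcs : Pairwise fun i j ↦ Disjoint (Metric.closedBall (θ i : AddCircle (2 * π)) α)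
      (Metric.closedBall (θ j : AddCircle (2 * π)) α) := by
    refine fun i j hij ↦ Set.disjoint_left.2 fun x hxi hxj ↦ ?_
    obtain ⟨φ, rfl⟩ := QuotientAddGroup.mk_surjective x
    exact Set.disjoint_left.1 (hθ hij) (unitVec_mem_diskCap hα hxi) (unitVec_mem_diskCap hα hxj)
  linarith [card_mul_le_of_pairwise_disjoint_closedBall (by linarith [hα.2, Real.pi_pos]) harcs]

lemma abs_cos_le_cos_of_mem_Icc {δ x : ℝ} (hδ : 0 ≤ δ) (hx : x ∈ Icc δ (π - δ)) :
    |Real.cos x| ≤ Real.cos δ := by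
  refine abs_le.2 ⟨?_, Real.cos_le_cos_of_nonneg_of_le_pi hδ (by linarith [hx.2]) hx.1⟩
  rw [← Real.cos_pi_sub]
  exact Real.cos_le_cos_of_nonneg_of_le_pi (hδ.trans hx.1) (by linarith) hx.2

lemma abs_cos_half_sub_le_cos_pi_div {k : ℕ} {i j : Fin k} (hij : i ≠ j) :
    |Real.cos ((2 * π * i / k - 2 * π * j / k) / 2)| ≤ Real.cos (π / k) := by
  wlog hlt : j < i generalizing i j
  · rw [← Real.cos_neg, ← neg_div, neg_sub]
    exact this hij.symm (lt_of_le_of_ne (not_lt.1 hlt) hij)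
  have hk : (0 : ℝ) < k := by exact_mod_cast (Nat.zero_le _).trans_lt i.2
  have hj : (j : ℝ) + 1 ≤ i := by exact_mod_cast hlt
  have hi : (i : ℝ) + 1 ≤ k := by exact_mod_cast i.2
  have hδ : 0 ≤ π / k := by positivity
  have harg : (2 * π * i / k - 2 * π * j / k) / 2 = (i - j) * (π / k) := by field_simp
  have hpi : π = k * (π / k) := by field_simp
  rw [harg]
  exact abs_cos_le_cos_of_mem_Icc hδ ⟨by nlinarith, by nlinarith [j.val.cast_nonneg (α := ℝ)]⟩

lemma pairwise_disjoint_diskCap_equispaced {α : ℝ} (hα : α ∈ Ico 0 (π / 2)) {k : ℕ}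
    (hk : k * α < π) :
    Pairwise fun i j : Fin k ↦ Disjoint (diskCap (Real.cos α • unitVec (2 * π * i / k)))
      (diskCap (Real.cos α • unitVec (2 * π * j / k))) := by
  intro i j hij
  have hk1 : (1 : ℝ) ≤ k := by exact_mod_cast (Nat.zero_le _).trans_lt i.2
  have hαk : α < π / k := by rwa [lt_div_iff₀' (by linarith)]
  have hcoslt : Real.cos (π / k) < Real.cos α :=
    Real.cos_lt_cos_of_nonneg_of_le_pi hα.1 (div_le_self Real.pi_nonneg hk1) hαk
  refine disjoint_diskCap_smul (cos_pos_of_mem_Ico hα) (norm_unitVec _) (norm_unitVec _) ?_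
  rw [norm_unitVec_add_unitVec]
  linarith [abs_cos_half_sub_le_cos_pi_div hij]

/-- The points `p i` induce pairwise disjoint `ε`-caps. -/
def IsCapPacking (β ε : ℝ) {k : ℕ} (p : Fin k → EuclideanSpace ℝ (Fin 2)) : Prop :=
  (∀ i, p i ≠ 0 ∧ ‖p i‖ ≤ 1 ∧ betaMeasure β (diskCap (p i)) = ENNReal.ofReal ε) ∧
    Pairwise fun i j ↦ Disjoint (diskCap (p i)) (diskCap (p j))

lemma IsCapPacking.card_mul_le_pi {β : ℝ} (hβ : -1 < β) {α : ℝ} (hα : α ∈ Ico 0 (π / 2)) {k : ℕ}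
    {p : Fin k → EuclideanSpace ℝ (Fin 2)} (hp : IsCapPacking β (capVolume β α) p) :
    k * α ≤ π := by
  have hsub : Ico 0 (π / 2) ⊆ Icc 0 π := fun x hx ↦ ⟨hx.1, by linarith [hx.2, Real.pi_pos]⟩
  have hpolar (i : Fin k) : ∃ θ : ℝ, p i = Real.cos α • unitVec θ := by
    obtain ⟨hp0, hp1, hvol⟩ := hp.1 i
    obtain ⟨α', hα', θ, hθ⟩ := exists_eq_cos_smul_unitVec hp0 hp1
    rw [hθ, betaMeasure_diskCap_cos_smul hβ hα' (norm_unitVec θ), ENNReal.ofReal_eq_ofReal_iff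
      (capVolume_nonneg hβ (hsub hα')) (capVolume_nonneg hβ (hsub hα))] at hvol
    have hα'α : α' = α := (strictMonoOn_capVolume hβ).injOn (hsub hα') (hsub hα) hvol
    exact ⟨θ, by rw [hθ, hα'α]⟩
  choose θ hθ using hpolar
  simpa using card_mul_le_pi_of_pairwise_disjoint_diskCap hα (θ := θ) fun i j hij ↦ by
    simpa only [hθ] using hp.2 hij

lemma isCapPacking_equispaced {β : ℝ} (hβ : -1 < β) {α : ℝ} (hα : α ∈ Ico 0 (π / 2)) {k : ℕ}
    (hk : k * α < π) :
    IsCapPacking β (capVolume β α) fun i : Fin k ↦ Real.cos α • unitVec (2 * π * i / k) := by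
  have hcos : 0 < Real.cos α := cos_pos_of_mem_Ico hα
  refine ⟨fun i ↦ ?_, pairwise_disjoint_diskCap_equispaced hα hk⟩
  have hnorm : ‖Real.cos α • unitVec (2 * π * i / k)‖ = Real.cos α := by
    rw [norm_smul, norm_unitVec, mul_one, Real.norm_of_nonneg hcos.le]
  exact ⟨norm_pos_iff.1 (hcos.trans_eq hnorm.symm), hnorm.trans_le (Real.cos_le_one α),
    betaMeasure_diskCap_cos_smul hβ hα (norm_unitVec _)⟩

lemma sSup_mul_mem_Icc {S : Set ℕ} {a b : ℝ} (ha : 0 < a) (hb : 0 < b)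
    (hS : ∀ k : ℕ, k * a < b → k ∈ S) (hS' : ∀ k ∈ S, k * a ≤ b) :
    (sSup S : ℕ) * a ∈ Icc (b - a) b := by
  have hbdd : BddAbove S := ⟨⌊b / a⌋₊, fun k hk ↦ Nat.le_floor ((le_div_iff₀ ha).2 (hS' k hk))⟩
  refine ⟨?_, hS' _ (Nat.sSup_mem ⟨0, hS 0 (by simpa using hb)⟩ hbdd)⟩
  by_contra! hlt
  have hsucc : sSup S + 1 ∈ S := hS _ (by push_cast; linarith)
  exact (Nat.lt_succ_self _).not_ge (le_csSup hbdd hsucc)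

lemma mEps_capVolume_mul_mem_Icc {β : ℝ} (hβ : -1 < β) {α : ℝ} (hα : α ∈ Ioo 0 (π / 2)) :
    mEps β (capVolume β α) * α ∈ Icc (π - α) π :=
  sSup_mul_mem_Icc hα.1 Real.pi_pos
    (fun _ hk ↦ ⟨_, isCapPacking_equispaced hβ (Ioo_subset_Ico_self hα) hk⟩)
    fun _ ⟨_, hp⟩ ↦ IsCapPacking.card_mul_le_pi hβ (Ioo_subset_Ico_self hα) hp

/-! ### Asymptotics -/

lemma tendsto_mEps_capVolume_mul {β : ℝ} (hβ : -1 < β) :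
    Tendsto (fun α ↦ mEps β (capVolume β α) * α) (𝓝[>] 0) (𝓝 π) := by
  have hlower : Tendsto (fun α ↦ π - α) (𝓝[>] 0) (𝓝 π) := by
    simpa using (tendsto_id (x := 𝓝 (0 : ℝ))).mono_left nhdsWithin_le_nhds |>.const_sub π
  have hbounds : ∀ᶠ α in 𝓝[>] 0, mEps β (capVolume β α) * α ∈ Icc (π - α) π := by
    filter_upwards [Ioo_mem_nhdsGT Real.pi_div_two_pos] with α hα
    exact mEps_capVolume_mul_mem_Icc hβ hα
  exact tendsto_of_tendsto_of_tendsto_of_le_of_le' hlower tendsto_const_nhds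
    (hbounds.mono fun _ h ↦ h.1) (hbounds.mono fun _ h ↦ h.2)

lemma nhdsGT_le_map_nhdsGT {X Y : Type*} [ConditionallyCompleteLinearOrder X] [TopologicalSpace X]
    [OrderTopology X] [DenselyOrdered X] [LinearOrder Y] [TopologicalSpace Y]
    [OrderClosedTopology Y] {f : X → Y} {a b : X} (hab : a < b) (hf : ContinuousOn f (Icc a b))
    (hlt : ∀ x ∈ Ioc a b, f a < f x) : 𝓝[>] (f a) ≤ map f (𝓝[>] a) := by
  intro s hs
  obtain ⟨c, hc, hcs⟩ := (mem_nhdsGT_iff_exists_Ioo_subset' hab).1 (mem_map.1 hs)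
  have hac : a < min b c := lt_min hab hc
  refine mem_of_superset (Ioo_mem_nhdsGT (hlt _ ⟨hac, min_le_left _ _⟩)) ?_
  calc Ioo (f a) (f (min b c)) ⊆ f '' Ioo a (min b c) :=
        intermediate_value_Ioo hac.le (hf.mono (Icc_subset_Icc_right (min_le_left _ _)))
    _ ⊆ s := image_subset_iff.2 ((Ioo_subset_Ioo_right (min_le_right _ _)).trans hcs)

lemma nhdsGT_zero_le_map_capVolume {β : ℝ} (hβ : -1 < β) :
    𝓝[>] 0 ≤ map (capVolume β) (𝓝[>] 0) := by
  simpa using nhdsGT_le_map_nhdsGT Real.pi_pos (continuous_capVolume hβ.le).continuousOn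
    fun α hα ↦ by simpa using capVolume_pos hβ hα

theorem max_disjoint_caps_asymptotics_general {β : ℝ} (hβ : -1 < β) :
    ∃ c : ℝ, 0 < c ∧
      Tendsto (fun ε : ℝ ↦ (mEps β ε : ℝ) * ε ^ (1 / (2 * β + 3))) (𝓝[>] 0) (𝓝 c) := by
  have hd : 0 < 2 * β + 3 := by linarith
  have hcoeff : 0 < capCoeff β / (2 * β + 3) := div_pos (capCoeff_pos hβ) hd
  refine ⟨π * (capCoeff β / (2 * β + 3)) ^ (1 / (2 * β + 3)), by positivity, ?_⟩
  refine Tendsto.mono_left (tendsto_map'_iff.2 ?_) (nhdsGT_zero_le_map_capVolume hβ)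
  have hroot := (tendsto_capVolume_div_rpow hβ.le).rpow_const (p := 1 / (2 * β + 3))
    (Or.inl hcoeff.ne')
  refine ((tendsto_mEps_capVolume_mul hβ).mul hroot).congr' ?_
  filter_upwards [Ioo_mem_nhdsGT Real.pi_pos] with α hα
  have hα0 : 0 < α := hα.1
  rw [Real.div_rpow (capVolume_pos hβ (Ioo_subset_Ioc_self hα)).le (by positivity), one_div,
    Real.rpow_rpow_inv hα0.le hd.ne', Function.comp_apply]
  field_simp

/-- for `d ≥ 4` and `β = d/2 - 2`, there is a constant `c > 0` with
`m(ε)·ε^{1/(d-1)} → c` as `ε → 0⁺`. -/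
theorem max_disjoint_caps_asymptotics (d : ℕ) (hd : 4 ≤ d)
    (β : ℝ) (hβ : β = (d : ℝ) / 2 - 2) :
    ∃ c : ℝ, 0 < c ∧
      Filter.Tendsto (fun ε : ℝ => (mEps β ε : ℝ) * ε ^ (1 / ((d : ℝ) - 1)))
        (nhdsWithin 0 (Set.Ioi 0)) (nhds c) := by
  have hd' : (4 : ℝ) ≤ d := by exact_mod_cast hd
  have hexp : (d : ℝ) - 1 = 2 * β + 3 := by rw [hβ]; ring
  exact hexp ▸ max_disjoint_caps_asymptotics_general (by linarith)
end

section
/- Fix an integer d ≥ 4 and set β = d/2 − 2, and fix an integer p ≥ 1. Let X₁, …, X_{n+1} be i.i.d. random points with law μ_β, set Qₙ = convexHull ℝ {X₁, …, Xₙ} and Q_{n+1} = convexHull ℝ {X₁, …, X_{n+1}}, and let f₀ denote the number of extreme points. Then there exist a constant c > 0 and an integer N₀ such that for all n ≥ N₀: E[ |f₀(Q_{n+1}) − f₀(Qₙ)|^p ] ≤ c·(log n)^{p+1−1/(d−1)}·n^{1/(d−1)−1}. -/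
open MeasureTheory

instance (β : ℝ) : SigmaFinite (betaMeasure β) :=
  SigmaFinite.withDensity_ofReal _

/-- The joint law of `n` i.i.d. points with law `μ_β`, realized on `(ℝ²)ⁿ`. -/
noncomputable def betaPi (β : ℝ) (n : ℕ) :
    Measure (Fin n → EuclideanSpace ℝ (Fin 2)) :=
  Measure.pi fun _ => betaMeasure β

/-- The number of vertices (extreme points) of the convex hull of a point
configuration, as a real number. -/
noncomputable def vertCount {n : ℕ} (ω : Fin n → EuclideanSpace ℝ (Fin 2)) : ℝ :=
  Nat.card (Set.extremePoints ℝ (convexHull ℝ (Set.range ω)))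

/-!
Adding a point `x` to a configuration `w` in the unit ball changes the number of hull vertices only
if `x` lies outside the hull of `w`. It then creates one vertex, and a vertex `v` it destroys is
seen from `x` along a segment leaving the hull. If the hull contains the ball of radius `1 - h`,
the midpoint of that segment has norm greater than `1 - h`, which forces `v` into the cap of height
`4h` around `x`. So the vertex count changes by at most one plus the number of points of `w` in this
cap, and it does not change at all unless `x` lies in the annulus `1 - h ≤ ‖x‖ ≤ 1`.

The hull contains that ball as soon as `w` meets a cap of height `h / 2` in every direction of a
finite net of mesh `h / 2`. Caps of height `h` have `β`-measure of order `h ^ (β + 3 / 2)`, so with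
`h ^ (β + 3 / 2) = K log n / n` and `K` large this fails with probability at most a power of `1 / n`
that beats the trivial bound `n + 1` on the difference. Otherwise the `p`-th moment is estimated by
`s ^ p ≤ p! t ^ (-p) exp (t s)` with `t = 1 / log n`: the exponential moment of the number of points
in the cap is then bounded, which leaves `(log n) ^ p` times the measure of the annulus, of order
`h ^ (β + 1)`.
-/

section ExtremePoints

variable {𝕜 E : Type*} [Field 𝕜] [LinearOrder 𝕜] [AddCommGroup E] [Module 𝕜 E] {s : Set E} {v x : E}

theorem convexHull_insert_of_mem (hx : x ∈ convexHull 𝕜 s) :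
    convexHull 𝕜 (insert x s) = convexHull 𝕜 s :=
  (convexHull_min (Set.insert_subset hx (subset_convexHull 𝕜 s)) (convex_convexHull 𝕜 s)).antisymm
    (convexHull_mono (Set.subset_insert x s))

variable [IsStrictOrderedRing 𝕜]

theorem extremePoints_convexHull_insert_subset :
    (convexHull 𝕜 (insert x s)).extremePoints 𝕜 ⊆ insert x ((convexHull 𝕜 s).extremePoints 𝕜) := by
  intro v hv
  refine (extremePoints_convexHull_subset hv).imp_right fun hvs => ?_
  exact inter_extremePoints_subset_extremePoints_of_subset
    (convexHull_mono (Set.subset_insert x s)) ⟨subset_convexHull 𝕜 s hvs, hv⟩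

theorem notMem_convexHull_sdiff_of_mem_extremePoints (hv : v ∈ (convexHull 𝕜 s).extremePoints 𝕜) :
    v ∉ convexHull 𝕜 (s \ {v}) := by
  intro hvs
  have hv' : v ∈ (convexHull 𝕜 (s \ {v})).extremePoints 𝕜 :=
    inter_extremePoints_subset_extremePoints_of_subset (convexHull_mono Set.sdiff_subset) ⟨hvs, hv⟩
  exact (extremePoints_convexHull_subset hv').2 rfl

theorem mem_extremePoints_convexHull_insert (hv : v ∉ convexHull 𝕜 s) :
    v ∈ (convexHull 𝕜 (insert v s)).extremePoints 𝕜 := by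
  rcases s.eq_empty_or_nonempty with rfl | hs
  · simp
  refine mem_extremePoints_iff_forall_segment.2
    ⟨subset_convexHull 𝕜 _ (Set.mem_insert v s), fun a ha b hb hab => ?_⟩
  rw [convexHull_insert hs, convexJoin_singleton_left, Set.mem_iUnion₂] at ha hb
  obtain ⟨q, hq, haq⟩ := ha
  obtain ⟨r, hr, hbr⟩ := hb
  rw [mem_segment_iff_wbtw] at hab haq hbr
  by_contra! hne
  have har : Wbtw 𝕜 a v r := hab.trans_expand_left hbr hne.2.symm
  have hrq : Wbtw 𝕜 r v q := har.symm.trans_expand_left haq hne.1.symm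
  exact hv ((convex_convexHull 𝕜 s).segment_subset hr hq hrq.mem_segment)

theorem notMem_convexHull_of_sbtw_of_notMem_extremePoints {m : E} (hx : x ∉ convexHull 𝕜 s)
    (hv : v ∈ (convexHull 𝕜 s).extremePoints 𝕜)
    (hv' : v ∉ (convexHull 𝕜 (insert x s)).extremePoints 𝕜) (hm : Sbtw 𝕜 x m v) :
    m ∉ convexHull 𝕜 s := by
  intro hms
  have hvs : v ∈ s := extremePoints_convexHull_subset hv
  have hvx : v ≠ x := fun h => hx (h ▸ subset_convexHull 𝕜 s hvs)
  have hvx' : v ∈ convexHull 𝕜 (insert x (s \ {v})) := by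
    by_contra hvx'
    have h := mem_extremePoints_convexHull_insert hvx'
    rw [Set.insert_comm, Set.insert_sdiff_singleton, Set.insert_eq_of_mem hvs] at h
    exact hv' h
  have hne : (s \ {v}).Nonempty := by
    by_contra! h
    simp [h, hvx] at hvx'
  rw [convexHull_insert hne, convexJoin_singleton_left, Set.mem_iUnion₂] at hvx'
  obtain ⟨q, hq, hvq⟩ := hvx'
  have hqv : v ≠ q := fun h => notMem_convexHull_sdiff_of_mem_extremePoints hv (h ▸ hq)
  have hmvq : Sbtw 𝕜 m v q := Sbtw.trans_left_right ⟨mem_segment_iff_wbtw.1 hvq, hvx, hqv⟩ hm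
  rcases (mem_extremePoints_iff_forall_segment.1 hv).2 m hms q
    (convexHull_mono Set.sdiff_subset hq) hmvq.wbtw.mem_segment with h | h
  · exact hmvq.left_ne h
  · exact hqv h.symm

end ExtremePoints

section HullVertexCount

variable {E : Type*} [AddCommGroup E] [Module ℝ E] {s : Set E} {x : E}

/-- The number `f₀(conv s)` of vertices of the convex hull of `s`; by the convention of `Set.ncard`
it is `0` if there are infinitely many. -/
noncomputable def hullVertexCount (s : Set E) : ℕ :=
  ((convexHull ℝ s).extremePoints ℝ).ncard

theorem hullVertexCount_insert_of_mem_convexHull (hx : x ∈ convexHull ℝ s) :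
    hullVertexCount (insert x s) = hullVertexCount s := by
  rw [hullVertexCount, convexHull_insert_of_mem hx, hullVertexCount]

theorem hullVertexCount_le_ncard (hs : s.Finite) : hullVertexCount s ≤ s.ncard :=
  Set.ncard_le_ncard extremePoints_convexHull_subset hs

theorem hullVertexCount_insert_le (hs : s.Finite) :
    hullVertexCount (insert x s) ≤ hullVertexCount s + 1 := by
  have hfin : ((convexHull ℝ s).extremePoints ℝ).Finite := hs.subset extremePoints_convexHull_subset
  exact (Set.ncard_le_ncard extremePoints_convexHull_insert_subset (hfin.insert x)).trans
    (Set.ncard_insert_le x _)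

theorem hullVertexCount_le_insert_add_ncard (hs : s.Finite) (hx : x ∉ convexHull ℝ s) :
    hullVertexCount s ≤ hullVertexCount (insert x s) +
      {v ∈ s | midpoint ℝ x v ∉ convexHull ℝ s}.ncard := by
  have hfin : ((convexHull ℝ (insert x s)).extremePoints ℝ).Finite :=
    (hs.insert x).subset extremePoints_convexHull_subset
  have hsub : (convexHull ℝ s).extremePoints ℝ ⊆ (convexHull ℝ (insert x s)).extremePoints ℝ ∪
      {v ∈ s | midpoint ℝ x v ∉ convexHull ℝ s} := by
    intro v hv
    have hvs : v ∈ s := extremePoints_convexHull_subset hv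
    have hxv : x ≠ v := fun h => hx (h ▸ subset_convexHull ℝ s hvs)
    refine or_iff_not_imp_left.2 fun hv' => ⟨hvs, ?_⟩
    exact notMem_convexHull_of_sbtw_of_notMem_extremePoints hx hv hv' (sbtw_midpoint_of_ne ℝ hxv)
  exact (Set.ncard_le_ncard hsub (hfin.union (hs.subset (Set.sep_subset _ _)))).trans
    (Set.ncard_union_le _ _)

/-- The first order difference `f₀(conv (w ∪ {x})) - f₀(conv w)` of the vertex count when the point
`x` is added to the configuration `w`. -/
noncomputable def hullVertexDiff {ι : Type*} (x : E) (w : ι → E) : ℝ :=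
  hullVertexCount (insert x (Set.range w)) - hullVertexCount (Set.range w)

theorem hullVertexDiff_eq_zero_of_mem_convexHull {ι : Type*} {w : ι → E}
    (hx : x ∈ convexHull ℝ (Set.range w)) : hullVertexDiff x w = 0 := by
  rw [hullVertexDiff, hullVertexCount_insert_of_mem_convexHull hx, sub_self]

theorem abs_hullVertexDiff_le {ι : Type*} [Fintype ι] (x : E) (w : ι → E) :
    |hullVertexDiff x w| ≤ Fintype.card ι + 1 := by
  have hcard : hullVertexCount (Set.range w) ≤ Fintype.card ι := by
    rw [← Nat.card_eq_fintype_card]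
    exact (hullVertexCount_le_ncard (Set.finite_range w)).trans (Finite.card_range_le w)
  have hinsert : hullVertexCount (insert x (Set.range w)) ≤ Fintype.card ι + 1 :=
    (hullVertexCount_insert_le (Set.finite_range w)).trans (Nat.succ_le_succ hcard)
  exact abs_sub_le_of_nonneg_of_le (Nat.cast_nonneg _) (mod_cast hinsert) (Nat.cast_nonneg _)
    (mod_cast hcard.trans (Nat.le_succ _))

theorem vertCount_sub_eq_hullVertexDiff {n : ℕ} (ω : Fin (n + 1) → EuclideanSpace ℝ (Fin 2)) :
    vertCount ω - vertCount (ω ∘ Fin.castSucc) =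
      hullVertexDiff (ω (Fin.last n)) (ω ∘ Fin.castSucc) := by
  have hvert {m : ℕ} (ω : Fin m → EuclideanSpace ℝ (Fin 2)) :
      vertCount ω = hullVertexCount (Set.range ω) := by
    rw [vertCount, Nat.card_coe_set_eq, hullVertexCount]
  have hsnoc : Fin.snoc (α := fun _ => EuclideanSpace ℝ (Fin 2)) (ω ∘ Fin.castSucc)
      (ω (Fin.last n)) = ω := Fin.snoc_init_self ω
  rw [hullVertexDiff, ← Fin.range_snoc, hsnoc, hvert, hvert]

end HullVertexCount

section Caps

open Metric Set
open scoped RealInnerProductSpace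

variable {E : Type*} [NormedAddCommGroup E] [InnerProductSpace ℝ E] {s N : Set E}
  {u v x : E} {h ε : ℝ}

/-- The half-space `{y | 1 - h ≤ ⟪u, y⟫}`. For a unit vector `u` it meets the unit ball in the cap
of height `h` around `u`. -/
def cap (u : E) (h : ℝ) : Set E :=
  {y | 1 - h ≤ ⟪u, y⟫}

theorem isClosed_cap : IsClosed (cap u h) :=
  isClosed_le continuous_const (by fun_prop)

theorem mem_cap_of_lt_norm_midpoint (hx : ‖x‖ ≤ 1) (hv : ‖v‖ ≤ 1) (hh : h ≤ 1)
    (hm : 1 - h < ‖midpoint ℝ x v‖) : v ∈ cap x (4 * h) := by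
  have hnorm : ‖x + v‖ = 2 * ‖midpoint ℝ x v‖ := by
    rw [midpoint_eq_smul_add, norm_smul]
    norm_num
    ring
  have hsq : (2 * (1 - h)) ^ 2 ≤ ‖x + v‖ ^ 2 := by
    rw [hnorm]
    gcongr
  rw [norm_add_sq_real] at hsq
  have hx2 : ‖x‖ ^ 2 ≤ 1 := pow_le_one₀ (norm_nonneg x) hx
  have hv2 : ‖v‖ ^ 2 ≤ 1 := pow_le_one₀ (norm_nonneg v) hv
  rw [cap, mem_ofPred_eq]
  nlinarith [sq_nonneg h]

theorem exists_norm_eq_one_cap_subset_cap [Nontrivial E] (hx : ‖x‖ ≤ 1) (hh : h < 1) :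
    ∃ u : E, ‖u‖ = 1 ∧ cap x h ⊆ cap u h := by
  rcases eq_or_ne x 0 with rfl | hx0
  · obtain ⟨u, hu⟩ := exists_norm_eq E zero_le_one
    refine ⟨u, hu, fun y hy => ?_⟩
    simp only [cap, mem_ofPred_eq, inner_zero_left] at hy
    linarith
  · refine ⟨‖x‖⁻¹ • x, norm_smul_inv_norm hx0, fun y hy => ?_⟩
    have hinv : 1 ≤ ‖x‖⁻¹ := (one_le_inv₀ (norm_pos_iff.2 hx0)).2 hx
    simp only [cap, mem_ofPred_eq, real_inner_smul_left] at hy ⊢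
    nlinarith

/-- A supporting functional of `conv s` that cuts off a point of the smaller ball would also cut off
the cap around a nearby direction of the net. -/
theorem closedBall_subset_convexHull_of_forall_cap [CompleteSpace E] [Nontrivial E]
    (hcl : IsClosed (convexHull ℝ s)) (hs : ∀ y ∈ s, ‖y‖ ≤ 1)
    (hN : ∀ u : E, ‖u‖ = 1 → ∃ v ∈ N, ‖u - v‖ ≤ ε) (hcap : ∀ v ∈ N, ∃ y ∈ s, y ∈ cap v h) :
    closedBall 0 (1 - (h + ε)) ⊆ convexHull ℝ s := by
  intro y hy
  rw [mem_closedBall_zero_iff] at hy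
  by_contra hys
  obtain ⟨f, c, hfc, hcf⟩ :=
    geometric_hahn_banach_closed_point (convex_convexHull ℝ s) hcl hys
  obtain ⟨g, rfl⟩ := (InnerProductSpace.toDual ℝ E).surjective f
  simp only [InnerProductSpace.toDual_apply_apply] at hfc hcf
  have hsep : ∀ z ∈ s, ⟪g, z⟫ < ⟪g, y⟫ := fun z hz => (hfc z (subset_convexHull ℝ s hz)).trans hcf
  obtain ⟨u, hu, hgu⟩ : ∃ u : E, ‖u‖ = 1 ∧ g = ‖g‖ • u := by
    rcases eq_or_ne g 0 with rfl | hg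
    · obtain ⟨u, hu⟩ := exists_norm_eq E zero_le_one
      exact ⟨u, hu, by simp⟩
    · exact ⟨‖g‖⁻¹ • g, norm_smul_inv_norm hg, by simp [smul_smul, hg]⟩
  obtain ⟨v, hv, huv⟩ := hN u hu
  obtain ⟨z, hz, hvz⟩ := hcap v hv
  have huvz : |⟪u - v, z⟫| ≤ ε :=
    calc |⟪u - v, z⟫| ≤ ‖u - v‖ * ‖z‖ := abs_real_inner_le_norm _ _
      _ ≤ ‖u - v‖ := mul_le_of_le_one_right (norm_nonneg _) (hs z hz)
      _ ≤ ε := huv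
  rw [inner_sub_left] at huvz
  have hyz : ‖y‖ ≤ ⟪u, z⟫ := by
    have hvz' : 1 - h ≤ ⟪v, z⟫ := hvz
    linarith [neg_le_of_abs_le huvz]
  refine (hsep z hz).not_ge ?_
  calc ⟪g, y⟫ ≤ ‖g‖ * ‖y‖ := real_inner_le_norm g y
    _ ≤ ‖g‖ * ⟪u, z⟫ := by gcongr
    _ = ⟪g, z⟫ := by rw [← real_inner_smul_left, ← hgu]

/-- The number of points of the configuration `w` in the cap of height `h` around `x`. It is real
valued and written as a sum of indicators so that its exponential moments factorize for i.i.d.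
points. -/
noncomputable def capCount {ι : Type*} [Fintype ι] (x : E) (h : ℝ) (w : ι → E) : ℝ :=
  ∑ i, (cap x h).indicator 1 (w i)

theorem capCount_eq_ncard {ι : Type*} [Fintype ι] (x : E) (h : ℝ) (w : ι → E) :
    capCount x h w = ({i | w i ∈ cap x h} : Set ι).ncard := by
  classical
  simp [capCount, indicator_apply, ncard_eq_toFinset_card']

theorem abs_hullVertexDiff_le_one_add_capCount {ι : Type*} [Fintype ι] {w : ι → E} (hx : ‖x‖ ≤ 1)
    (hw : ∀ i, ‖w i‖ ≤ 1) (hh : h ≤ 1) (hball : closedBall 0 (1 - h) ⊆ convexHull ℝ (range w)) :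
    |hullVertexDiff x w| ≤ 1 + capCount x (4 * h) w := by
  have hcount : 0 ≤ capCount x (4 * h) w := by rw [capCount_eq_ncard]; positivity
  by_cases hxw : x ∈ convexHull ℝ (range w)
  · rw [hullVertexDiff_eq_zero_of_mem_convexHull hxw, abs_zero]
    positivity
  have hsub : {v ∈ range w | midpoint ℝ x v ∉ convexHull ℝ (range w)} ⊆
      w '' {i | w i ∈ cap x (4 * h)} := by
    rintro _ ⟨⟨i, rfl⟩, hi⟩
    refine mem_image_of_mem w (mem_cap_of_lt_norm_midpoint hx (hw i) hh ?_)
    by_contra! hle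
    exact hi (hball (mem_closedBall_zero_iff.2 hle))
  have hgain : (hullVertexCount (insert x (range w)) : ℝ) ≤ hullVertexCount (range w) + 1 :=
    mod_cast hullVertexCount_insert_le (finite_range w)
  have hloss : (hullVertexCount (range w) : ℝ) ≤
      hullVertexCount (insert x (range w)) + capCount x (4 * h) w := by
    have hcard := (ncard_le_ncard hsub (toFinite _)).trans (ncard_image_le (toFinite _))
    rw [capCount_eq_ncard]
    exact_mod_cast (hullVertexCount_le_insert_add_ncard (finite_range w) hxw).trans
      (Nat.add_le_add_left hcard _)
  exact abs_sub_le_iff.2 ⟨by linarith, by linarith⟩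

end Caps

section CircleNet

open Complex

theorem exists_finset_complex_unit_net {k : ℕ} (hk : 0 < k) :
    ∃ N : Finset ℂ, N.card ≤ k ∧ (∀ v ∈ N, ‖v‖ = 1) ∧
      ∀ u : ℂ, ‖u‖ = 1 → ∃ v ∈ N, ‖u - v‖ ≤ 2 * Real.pi / k := by
  classical
  have hδ : 0 < 2 * Real.pi / k := by positivity
  set δ := 2 * Real.pi / k with hδ_def
  refine ⟨(Finset.Icc 1 k).image fun j : ℕ => circleMap 0 1 (j * δ - Real.pi),
    Finset.card_image_le.trans (by simp), ?_, fun u hu => ?_⟩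
  · exact Finset.forall_mem_image.2 fun j _ => by rw [norm_circleMap_zero, abs_one]
  have harg : circleMap 0 1 u.arg = u := by
    simpa [circleMap, hu] using norm_mul_exp_arg_mul_I u
  have hpos : 0 < (u.arg + Real.pi) / δ := div_pos (by linarith [neg_pi_lt_arg u]) hδ
  have hlek : (u.arg + Real.pi) / δ ≤ k := by
    rw [div_le_iff₀ hδ, hδ_def, mul_div_cancel₀ _ (Nat.cast_ne_zero.2 hk.ne')]
    linarith [arg_le_pi u]
  set j := ⌈(u.arg + Real.pi) / δ⌉₊
  have hj_ge : u.arg + Real.pi ≤ j * δ := (div_le_iff₀ hδ).1 (Nat.le_ceil _)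
  have hj_lt : j * δ < u.arg + Real.pi + δ := by
    have := (mul_lt_mul_iff_left₀ hδ).2 (Nat.ceil_lt_add_one hpos.le)
    rwa [add_mul, one_mul, div_mul_cancel₀ _ hδ.ne'] at this
  refine ⟨_, Finset.mem_image_of_mem _
    (Finset.mem_Icc.2 ⟨Nat.ceil_pos.2 hpos, Nat.ceil_le.2 hlek⟩), ?_⟩
  calc ‖u - circleMap 0 1 (j * δ - Real.pi)‖
      = dist (circleMap 0 1 u.arg) (circleMap 0 1 (j * δ - Real.pi)) := by rw [harg, dist_eq]
    _ ≤ dist u.arg (j * δ - Real.pi) := by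
      simpa using (lipschitzWith_circleMap 0 1).dist_le_mul u.arg (j * δ - Real.pi)
    _ ≤ δ := abs_sub_le_iff.2 ⟨by linarith, by linarith⟩

theorem exists_finset_unit_net {k : ℕ} (hk : 0 < k) :
    ∃ N : Finset (EuclideanSpace ℝ (Fin 2)), N.card ≤ k ∧ (∀ v ∈ N, ‖v‖ = 1) ∧
      ∀ u : EuclideanSpace ℝ (Fin 2), ‖u‖ = 1 → ∃ v ∈ N, ‖u - v‖ ≤ 2 * Real.pi / k := by
  obtain ⟨N, hcard, hunit, hnet⟩ := exists_finset_complex_unit_net hk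
  let e : ℂ ≃ₗᵢ[ℝ] EuclideanSpace ℝ (Fin 2) := orthonormalBasisOneI.repr
  refine ⟨N.map e.toEquiv.toEmbedding, by simpa using hcard, ?_, fun u hu => ?_⟩
  · exact Finset.forall_mem_map.2 fun v hv => (e.norm_map v).trans (hunit v hv)
  obtain ⟨v, hv, huv⟩ := hnet (e.symm u) (by simpa using hu)
  refine ⟨e v, Finset.mem_map_of_mem _ hv, ?_⟩
  rwa [← e.symm.norm_map, map_sub, e.symm_apply_apply]

end CircleNet

section IidPoints

variable {Ω : Type*} [MeasurableSpace Ω] {μ : Measure Ω}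

theorem integral_pi_fin_succ_last [SigmaFinite μ] {n : ℕ} (F : Ω × (Fin n → Ω) → ℝ) :
    ∫ ω : Fin (n + 1) → Ω, F (ω (Fin.last n), ω ∘ Fin.castSucc) ∂Measure.pi (fun _ => μ) =
      ∫ q, F q ∂μ.prod (Measure.pi fun _ => μ) := by
  let e := MeasurableEquiv.piFinSuccAbove (fun _ : Fin (n + 1) => Ω) (Fin.last n)
  have he (ω : Fin (n + 1) → Ω) : (ω (Fin.last n), ω ∘ Fin.castSucc) = e ω :=
    Prod.ext rfl (funext fun i => congrArg ω (Fin.succAbove_last_apply i).symm)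
  simp only [he]
  exact (measurePreserving_piFinSuccAbove (fun _ => μ) (Fin.last n)).integral_comp
    e.measurableEmbedding F

variable [IsProbabilityMeasure μ] {ι : Type*} [Fintype ι] {A : Set Ω}

theorem pi_real_forall_notMem_le {m : ℝ} (hA : MeasurableSet A) (hm : m ≤ μ.real A) :
    (Measure.pi fun _ : ι => μ).real {w | ∀ i, w i ∉ A} ≤ Real.exp (-(Fintype.card ι * m)) := by
  have hpi : {w : ι → Ω | ∀ i, w i ∉ A} = Set.univ.pi fun _ => Aᶜ := by ext; simp
  calc (Measure.pi fun _ : ι => μ).real {w | ∀ i, w i ∉ A}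
      = (1 - μ.real A) ^ Fintype.card ι := by
        rw [hpi, measureReal_def, Measure.pi_pi, Finset.prod_const, ENNReal.toReal_pow,
          ← measureReal_def, probReal_compl_eq_one_sub hA, Finset.card_univ]
    _ ≤ Real.exp (-m) ^ Fintype.card ι := by
        gcongr
        · exact sub_nonneg.2 measureReal_le_one
        · linarith [Real.one_sub_le_exp_neg m]
    _ = Real.exp (-(Fintype.card ι * m)) := by rw [← Real.exp_nat_mul, mul_neg]

theorem pi_real_exists_forall_notMem_le {κ : Type*} {N : Finset κ} {A : κ → Set Ω} {m : ℝ}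
    (hA : ∀ v ∈ N, MeasurableSet (A v)) (hm : ∀ v ∈ N, m ≤ μ.real (A v)) :
    (Measure.pi fun _ : ι => μ).real {w | ∃ v ∈ N, ∀ i, w i ∉ A v} ≤
      N.card * Real.exp (-(Fintype.card ι * m)) := by
  have hunion : {w : ι → Ω | ∃ v ∈ N, ∀ i, w i ∉ A v} = ⋃ v ∈ N, {w | ∀ i, w i ∉ A v} := by
    ext; simp
  rw [hunion, ← nsmul_eq_mul]
  exact (measureReal_biUnion_finset_le N _).trans <|
    Finset.sum_le_card_nsmul _ _ _ fun v hv => pi_real_forall_notMem_le (hA v hv) (hm v hv)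

theorem integral_exp_mul_sum_indicator_le {t M : ℝ} (hA : MeasurableSet A) (ht : 0 ≤ t)
    (hM : μ.real A ≤ M) :
    ∫ w : ι → Ω, Real.exp (t * ∑ i, A.indicator 1 (w i)) ∂Measure.pi (fun _ => μ) ≤
      Real.exp (Fintype.card ι * ((Real.exp t - 1) * M)) := by
  have hexp (y : Ω) : Real.exp (t * A.indicator 1 y) =
      1 + A.indicator (fun _ => Real.exp t - 1) y := by
    by_cases hy : y ∈ A <;> simp [hy]
  have hmgf : ∫ y, Real.exp (t * A.indicator 1 y) ∂μ = 1 + (Real.exp t - 1) * μ.real A := by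
    simp only [hexp]
    rw [integral_add (integrable_const _) ((integrable_const _).indicator hA),
      integral_indicator_const _ hA]
    simp [mul_comm]
  have ht' : 0 ≤ Real.exp t - 1 := sub_nonneg.2 (Real.one_le_exp ht)
  calc ∫ w : ι → Ω, Real.exp (t * ∑ i, A.indicator 1 (w i)) ∂Measure.pi (fun _ => μ)
      = (1 + (Real.exp t - 1) * μ.real A) ^ Fintype.card ι := by
        rw [← hmgf, ← integral_fintype_prod_eq_pow]
        simp only [Finset.mul_sum, Real.exp_sum]
    _ ≤ Real.exp ((Real.exp t - 1) * M) ^ Fintype.card ι := by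
        gcongr
        nlinarith [Real.add_one_le_exp ((Real.exp t - 1) * M)]
    _ = Real.exp (Fintype.card ι * ((Real.exp t - 1) * M)) := by rw [← Real.exp_nat_mul]

theorem ae_pi_forall {P : Ω → Prop} (hP : ∀ᵐ x ∂μ, P x) :
    ∀ᵐ w ∂Measure.pi (fun _ : ι => μ), ∀ i, P (w i) :=
  ae_all_iff.2 fun i => (Measure.quasiMeasurePreserving_eval (fun _ => μ) i).ae hP

end IidPoints

theorem pow_le_factorial_div_pow_mul_exp {D t : ℝ} (hD : 0 ≤ D) (ht : 0 < t) (p : ℕ) :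
    D ^ p ≤ p.factorial / t ^ p * Real.exp (t * D) := by
  have h := Real.pow_div_factorial_le_exp (t * D) (by positivity) p
  rw [mul_pow, div_le_iff₀ (by positivity)] at h
  rw [div_mul_eq_mul_div, le_div_iff₀ (by positivity)]
  linarith

theorem setIntegral_prod_univ_le {X Y : Type*} [MeasurableSpace X] [MeasurableSpace Y]
    {μ : Measure X} {ν : Measure Y} [IsFiniteMeasure μ] [SFinite ν] {F : X × Y → ℝ} {R : Set X}
    {B : ℝ} (hF : Integrable F (μ.prod ν)) (hR : MeasurableSet R)
    (hB : ∀ x ∈ R, ∫ y, F (x, y) ∂ν ≤ B) :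
    ∫ q in R ×ˢ Set.univ, F q ∂μ.prod ν ≤ μ.real R * B := by
  calc ∫ q in R ×ˢ Set.univ, F q ∂μ.prod ν = ∫ x in R, ∫ y, F (x, y) ∂ν ∂μ := by
        rw [setIntegral_prod _ hF.integrableOn, Measure.restrict_univ]
    _ ≤ ∫ _ in R, B ∂μ :=
        setIntegral_mono_on hF.integral_prod_left.integrableOn (integrable_const _) hR hB
    _ = μ.real R * B := by rw [setIntegral_const, smul_eq_mul]

section MomentBound

open Metric
open scoped RealInnerProductSpace

variable {E ι : Type*} [NormedAddCommGroup E] [InnerProductSpace ℝ E] [Fintype ι]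

variable (ι) in
/-- The configurations of points that leave empty one of the caps of height `h` around the
directions in `N`. -/
def emptyCapSet (N : Finset E) (h : ℝ) : Set (ι → E) :=
  {w | ∃ v ∈ N, ∀ i, w i ∉ cap v h}

/-- Either some cap of the net is empty and the trivial bound applies, or `conv w` contains the ball
of radius `1 - h`; then only points `x` outside that ball change the hull. -/
theorem abs_hullVertexDiff_pow_le [CompleteSpace E] [Nontrivial E] {N : Finset E} {h t : ℝ} {x : E}
    {w : ι → E} {p : ℕ} (hx : ‖x‖ ≤ 1) (hw : ∀ i, ‖w i‖ ≤ 1) (hh : h ≤ 1) (ht : 0 < t)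
    (hN : ∀ u : E, ‖u‖ = 1 → ∃ v ∈ N, ‖u - v‖ ≤ h / 2) (hp : p ≠ 0) :
    |hullVertexDiff x w| ^ p ≤
      (Set.univ ×ˢ emptyCapSet ι N (h / 2)).indicator
        (fun _ => ((Fintype.card ι : ℝ) + 1) ^ p) (x, w) +
      ((closedBall 0 1 \ ball 0 (1 - h)) ×ˢ Set.univ).indicator
        (fun q => p.factorial / t ^ p * Real.exp t * Real.exp (t * capCount q.1 (4 * h) q.2))
        (x, w) := by
  by_cases hempty : w ∈ emptyCapSet ι N (h / 2)
  · rw [Set.indicator_of_mem (Set.mk_mem_prod (Set.mem_univ x) hempty)]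
    refine le_add_of_le_of_nonneg ?_ (Set.indicator_nonneg (fun _ _ => by positivity) _)
    gcongr
    exact abs_hullVertexDiff_le x w
  have hball : closedBall 0 (1 - h) ⊆ convexHull ℝ (Set.range w) := by
    have hhit : ∀ v ∈ N, ∃ y ∈ Set.range w, y ∈ cap v (h / 2) := by
      simpa [emptyCapSet] using hempty
    have hhull := closedBall_subset_convexHull_of_forall_cap
      ((Set.finite_range w).isClosed_convexHull ℝ) (Set.forall_mem_range.2 hw) hN hhit
    rwa [add_halves] at hhull
  refine le_add_of_nonneg_of_le (Set.indicator_nonneg (fun _ _ => by positivity) _) ?_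
  by_cases hxh : x ∈ ball 0 (1 - h)
  · rw [hullVertexDiff_eq_zero_of_mem_convexHull (hball (ball_subset_closedBall hxh)), abs_zero,
      zero_pow hp]
    exact Set.indicator_nonneg (fun _ _ => by positivity) _
  have hxR : x ∈ closedBall (0 : E) 1 \ ball 0 (1 - h) := ⟨mem_closedBall_zero_iff.2 hx, hxh⟩
  rw [Set.indicator_of_mem (Set.mk_mem_prod hxR (Set.mem_univ w)), mul_assoc, ← Real.exp_add]
  refine (pow_le_factorial_div_pow_mul_exp (abs_nonneg _) ht p).trans ?_
  gcongr
  nlinarith [abs_hullVertexDiff_le_one_add_capCount hx hw hh hball]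

variable [MeasurableSpace E] {μ : Measure E} [IsProbabilityMeasure μ]

theorem measurableSet_emptyCapSet {κ : Type*} [Countable κ] [BorelSpace E] (N : Finset E)
    (h : ℝ) : MeasurableSet (emptyCapSet κ N h) := by
  have hunion : emptyCapSet κ N h = ⋃ v ∈ N, ⋂ i, {w | w i ∈ cap v h}ᶜ := by
    ext; simp [emptyCapSet]
  rw [hunion]
  exact N.measurableSet_biUnion fun v _ => .iInter fun i =>
    (measurable_pi_apply i isClosed_cap.measurableSet).compl

theorem pi_real_emptyCapSet_le [BorelSpace E] {N : Finset E} {h m : ℝ}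
    (hm : ∀ v ∈ N, m ≤ μ.real (cap v h)) :
    (Measure.pi fun _ => μ).real (emptyCapSet ι N h) ≤
      N.card * Real.exp (-(Fintype.card ι * m)) :=
  pi_real_exists_forall_notMem_le (fun _ _ => isClosed_cap.measurableSet) hm

variable [BorelSpace E] [SecondCountableTopology E]

theorem measurable_capCount (h : ℝ) :
    Measurable fun q : E × (ι → E) => capCount q.1 h q.2 := by
  have hcap : MeasurableSet {q : E × E | 1 - h ≤ ⟪q.1, q.2⟫} :=
    (isClosed_le continuous_const (by fun_prop)).measurableSet
  refine Finset.measurable_fun_sum _ fun i _ => ?_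
  exact (measurable_one.indicator hcap).comp
    (f := fun q : E × (ι → E) => (q.1, q.2 i)) (by fun_prop)

theorem integrable_exp_mul_capCount (h t : ℝ) (μ : Measure (E × (ι → E))) [IsFiniteMeasure μ] :
    Integrable (fun q => Real.exp (t * capCount q.1 h q.2)) μ := by
  refine Integrable.of_bound ((measurable_capCount h).const_mul t).exp.aestronglyMeasurable
    (Real.exp (|t| * Fintype.card ι)) (.of_forall fun q => ?_)
  have hle : |capCount q.1 h q.2| ≤ Fintype.card ι := by
    rw [capCount_eq_ncard, Nat.abs_cast]
    exact_mod_cast (Set.ncard_le_card _).trans Nat.card_eq_fintype_card.le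
  rw [Real.norm_eq_abs, Real.abs_exp, Real.exp_le_exp]
  calc t * capCount q.1 h q.2 ≤ |t| * |capCount q.1 h q.2| := (le_abs_self _).trans (abs_mul _ _).le
    _ ≤ |t| * Fintype.card ι := by gcongr

theorem integral_abs_hullVertexDiff_pow_le [CompleteSpace E] [Nontrivial E] {N : Finset E}
    {h t m M : ℝ} {p : ℕ} (hμ : ∀ᵐ x ∂μ, ‖x‖ ≤ 1) (hh : h ≤ 1) (ht : 0 < t)
    (hN : ∀ u : E, ‖u‖ = 1 → ∃ v ∈ N, ‖u - v‖ ≤ h / 2)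
    (hm : ∀ v ∈ N, m ≤ μ.real (cap v (h / 2))) (hM : ∀ x, ‖x‖ ≤ 1 → μ.real (cap x (4 * h)) ≤ M)
    (hp : p ≠ 0) :
    ∫ q, |hullVertexDiff q.1 q.2| ^ p ∂μ.prod (Measure.pi fun _ : ι => μ) ≤
      (Fintype.card ι + 1) ^ p * (N.card * Real.exp (-(Fintype.card ι * m))) +
      p.factorial / t ^ p * Real.exp t *
        (μ.real (ball 0 (1 - h))ᶜ * Real.exp (Fintype.card ι * ((Real.exp t - 1) * M))) := by
  set π := Measure.pi fun _ : ι => μ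
  set R : Set E := closedBall 0 1 \ ball 0 (1 - h)
  set c := p.factorial / t ^ p * Real.exp t
  have hR : MeasurableSet R := measurableSet_closedBall.diff measurableSet_ball
  have hcap : MeasurableSet (Set.univ (α := E) ×ˢ emptyCapSet ι N (h / 2)) :=
    MeasurableSet.univ.prod (measurableSet_emptyCapSet N _)
  have hexp := integrable_exp_mul_capCount (4 * h) t (μ.prod π)
  have hfst := (integrable_const (((Fintype.card ι : ℝ) + 1) ^ p) (μ := μ.prod π)).indicator hcap
  have hsnd := (hexp.const_mul c).indicator (hR.prod .univ)
  have hsetInt : ∫ q in R ×ˢ Set.univ, Real.exp (t * capCount q.1 (4 * h) q.2) ∂μ.prod π ≤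
      μ.real R * Real.exp (Fintype.card ι * ((Real.exp t - 1) * M)) :=
    setIntegral_prod_univ_le hexp hR fun x hx => integral_exp_mul_sum_indicator_le
      isClosed_cap.measurableSet ht.le (hM x (mem_closedBall_zero_iff.1 hx.1))
  calc ∫ q, |hullVertexDiff q.1 q.2| ^ p ∂μ.prod π
      ≤ ∫ q, ((Set.univ ×ˢ emptyCapSet ι N (h / 2)).indicator
          (fun _ => ((Fintype.card ι : ℝ) + 1) ^ p) q + (R ×ˢ Set.univ).indicator
          (fun q => c * Real.exp (t * capCount q.1 (4 * h) q.2)) q) ∂μ.prod π := by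
        refine integral_mono_of_nonneg (.of_forall fun q => pow_nonneg (abs_nonneg _) _)
          (hfst.add hsnd) ?_
        filter_upwards [Measure.quasiMeasurePreserving_fst.ae hμ,
          Measure.quasiMeasurePreserving_snd.ae (ae_pi_forall hμ)] with q hx hw
        exact abs_hullVertexDiff_pow_le hx hw hh ht hN hp
    _ = (Fintype.card ι + 1) ^ p * π.real (emptyCapSet ι N (h / 2)) +
        c * ∫ q in R ×ˢ Set.univ, Real.exp (t * capCount q.1 (4 * h) q.2) ∂μ.prod π := by
        rw [integral_add hfst hsnd, integral_indicator_const _ hcap,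
          integral_indicator (hR.prod .univ), integral_const_mul, measureReal_prod_prod,
          probReal_univ, one_mul, smul_eq_mul, mul_comm]
    _ ≤ _ := by
        gcongr
        · exact pi_real_emptyCapSet_le hm
        · exact hsetInt.trans <| mul_le_mul_of_nonneg_right
            (measureReal_mono (Set.sdiff_subset_compl _ _)) (Real.exp_nonneg _)

end MomentBound

section BetaMeasure

open Metric

variable {β : ℝ}

theorem integral_id_mul_one_sub_sq_rpow (hβ : 0 ≤ β) (r : ℝ) :
    ∫ y in r..1, y * (1 - y ^ 2) ^ β = (1 - r ^ 2) ^ (β + 1) / (2 * (β + 1)) := by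
  have hβ1 : β + 1 ≠ 0 := by positivity
  have hderiv (y : ℝ) : HasDerivAt (fun y : ℝ => -(1 - y ^ 2) ^ (β + 1) / (2 * (β + 1)))
      (y * (1 - y ^ 2) ^ β) y := by
    have hinner : HasDerivAt (fun y : ℝ => 1 - y ^ 2) (-(2 * y)) y := by
      simpa using (hasDerivAt_pow 2 y).const_sub 1
    refine ((hinner.rpow_const (p := β + 1) (.inr (by linarith))).neg.div_const
      (2 * (β + 1))).congr_deriv ?_
    rw [add_sub_cancel_right]
    field_simp
  have hcont : Continuous fun y : ℝ => y * (1 - y ^ 2) ^ β :=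
    continuous_id.mul (Continuous.rpow_const (by fun_prop) fun _ => .inr hβ)
  rw [intervalIntegral.integral_eq_sub_of_hasDerivAt (fun y _ => hderiv y)
    (hcont.intervalIntegrable r 1)]
  simp [Real.zero_rpow hβ1, neg_div]

theorem betaMeasure_apply (β : ℝ) (S : Set (EuclideanSpace ℝ (Fin 2))) :
    betaMeasure β S = ∫⁻ x in closedBall 0 1 ∩ S,
      ENNReal.ofReal ((β + 1) / Real.pi * (1 - ‖x‖ ^ 2) ^ β) := by
  rw [betaMeasure, withDensity_apply', ← setLIntegral_indicator measurableSet_closedBall]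
  congr with x
  simp only [Set.indicator, mem_closedBall_zero_iff]
  split_ifs <;> simp

theorem ae_betaMeasure_norm_le_one (β : ℝ) : ∀ᵐ x ∂betaMeasure β, ‖x‖ ≤ 1 := by
  rw [ae_iff, betaMeasure_apply]
  have hempty : closedBall 0 1 ∩ {x : EuclideanSpace ℝ (Fin 2) | ¬‖x‖ ≤ 1} = ∅ := by
    ext; simp
  rw [hempty, setLIntegral_empty]

theorem setIntegral_norm_preimage_Icc (f : ℝ → ℝ) {r s : ℝ} (hr : 0 ≤ r) (hrs : r ≤ s) :
    ∫ x : EuclideanSpace ℝ (Fin 2) in norm ⁻¹' Set.Icc r s, f ‖x‖ =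
      2 * Real.pi * ∫ y in r..s, y * f y := by
  have hball : (volume : Measure (EuclideanSpace ℝ (Fin 2))).real (ball 0 1) = Real.pi := by
    simp [measureReal_def, EuclideanSpace.volume_ball_fin_two, Real.pi_nonneg]
  have hprofile : ∫ y in Set.Ioi 0, y ^ (2 - 1) • (Set.Icc r s).indicator f y =
      ∫ y in r..s, y * f y := by
    have hind (y : ℝ) : y ^ (2 - 1) • (Set.Icc r s).indicator f y =
        (Set.Icc r s).indicator (fun y => y * f y) y := by
      simp [Set.indicator]
    simp only [hind]
    rw [← integral_Ici_eq_integral_Ioi, setIntegral_indicator measurableSet_Icc,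
      Set.inter_eq_right.2 (Set.Icc_subset_Ici_self.trans (Set.Ici_subset_Ici.2 hr)),
      integral_Icc_eq_integral_Ioc, intervalIntegral.integral_of_le hrs]
  calc ∫ x : EuclideanSpace ℝ (Fin 2) in norm ⁻¹' Set.Icc r s, f ‖x‖
      = ∫ x : EuclideanSpace ℝ (Fin 2), (Set.Icc r s).indicator f ‖x‖ :=
        (integral_indicator (measurable_norm measurableSet_Icc)).symm
    _ = 2 * Real.pi * ∫ y in r..s, y * f y := by
        rw [integral_fun_norm_addHaar, finrank_euclideanSpace_fin, hprofile, hball,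
          nsmul_eq_mul, smul_eq_mul, Nat.cast_ofNat, mul_assoc]

theorem betaMeasure_compl_ball (hβ : 0 ≤ β) {r : ℝ} (hr : 0 ≤ r) (hr1 : r ≤ 1) :
    betaMeasure β (ball 0 r)ᶜ = ENNReal.ofReal ((1 - r ^ 2) ^ (β + 1)) := by
  have hR : closedBall 0 1 ∩ (ball 0 r)ᶜ =
      (norm ⁻¹' Set.Icc r 1 : Set (EuclideanSpace ℝ (Fin 2))) := by
    ext; simp [and_comm]
  have hcont : Continuous fun x : EuclideanSpace ℝ (Fin 2) =>
      (β + 1) / Real.pi * (1 - ‖x‖ ^ 2) ^ β :=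
    continuous_const.mul (Continuous.rpow_const (by fun_prop) fun _ => .inr hβ)
  have hint := (hcont.continuousOn.integrableOn_compact (μ := volume)
    (isCompact_closedBall 0 1)).mono_set (Set.inter_subset_left (t := (ball 0 r)ᶜ))
  have hnonneg : ∀ x ∈ closedBall (0 : EuclideanSpace ℝ (Fin 2)) 1 ∩ (ball 0 r)ᶜ,
      0 ≤ (β + 1) / Real.pi * (1 - ‖x‖ ^ 2) ^ β := fun x hx => by
    have hx1 := pow_le_one₀ (n := 2) (norm_nonneg x) (mem_closedBall_zero_iff.1 hx.1)
    have := Real.rpow_nonneg (sub_nonneg.2 hx1) β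
    positivity
  rw [betaMeasure_apply, ← ofReal_integral_eq_lintegral_ofReal hint
    ((ae_restrict_mem (measurableSet_closedBall.inter measurableSet_ball.compl)).mono hnonneg),
    hR, setIntegral_norm_preimage_Icc (fun y => (β + 1) / Real.pi * (1 - y ^ 2) ^ β) hr hr1]
  simp only [mul_left_comm _ ((β + 1) / Real.pi)]
  rw [intervalIntegral.integral_const_mul, integral_id_mul_one_sub_sq_rpow hβ]
  congr 1
  field_simp

theorem isProbabilityMeasure_betaMeasure (hβ : 0 ≤ β) : IsProbabilityMeasure (betaMeasure β) := by
  constructor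
  simpa using betaMeasure_compl_ball hβ le_rfl zero_le_one

end BetaMeasure

section OrthonormalBox

open scoped RealInnerProductSpace

variable {F ι : Type*} [NormedAddCommGroup F] [InnerProductSpace ℝ F] [Fintype ι]

/-- The box of all points whose coordinates with respect to the orthonormal basis `b` lie between
those of `l` and `u`. -/
def orthonormalBox (b : OrthonormalBasis ι ℝ F) (l u : ι → ℝ) : Set F :=
  {y | ∀ i, ⟪b i, y⟫ ∈ Set.Icc (l i) (u i)}

theorem volume_orthonormalBox [FiniteDimensional ℝ F] [MeasurableSpace F] [BorelSpace F]
    (b : OrthonormalBasis ι ℝ F) (l u : ι → ℝ) :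
    volume (orthonormalBox b l u) = ∏ i, ENNReal.ofReal (u i - l i) := by
  have hpres := (PiLp.volume_preserving_ofLp ι).comp b.measurePreserving_repr
  have hbox : orthonormalBox b l u = (WithLp.ofLp ∘ b.repr) ⁻¹' Set.Icc l u := by
    ext y
    simp [orthonormalBox, Pi.le_def, b.repr_apply_apply, forall_and]
  rw [hbox, hpres.measure_preimage measurableSet_Icc.nullMeasurableSet, Real.volume_Icc_pi]

theorem exists_orthonormalBasis_zero_eq {n : ℕ} (hn : Module.finrank ℝ F = n + 1) {u : F}
    (hu : ‖u‖ = 1) : ∃ b : OrthonormalBasis (Fin (n + 1)) ℝ F, b 0 = u := by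
  have : FiniteDimensional ℝ F := .of_finrank_pos (by omega)
  have hv : Orthonormal ℝ (({0} : Set (Fin (n + 1))).domRestrict fun _ => u) :=
    ⟨fun _ => hu, fun i j hij => absurd (Subsingleton.elim i j) hij⟩
  obtain ⟨b, hb⟩ := hv.exists_orthonormalBasis_extension_of_card_eq (by simpa using hn)
  exact ⟨b, hb 0 rfl⟩

end OrthonormalBox

section BetaMeasureCap

open Metric
open scoped RealInnerProductSpace

variable {β h t : ℝ} {u x : EuclideanSpace ℝ (Fin 2)} {S : Set (EuclideanSpace ℝ (Fin 2))}

theorem betaMeasure_le_mul_volume (hβ : 0 ≤ β)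
    (hS : ∀ y ∈ S, ‖y‖ ≤ 1 → 1 - ‖y‖ ^ 2 ≤ t) :
    betaMeasure β S ≤
      ENNReal.ofReal ((β + 1) / Real.pi * t ^ β) * volume (closedBall 0 1 ∩ S) := by
  rw [betaMeasure_apply, ← setLIntegral_const]
  refine setLIntegral_mono measurable_const fun y ⟨hy, hyS⟩ => ?_
  rw [mem_closedBall_zero_iff] at hy
  have : 0 ≤ 1 - ‖y‖ ^ 2 := sub_nonneg.2 (pow_le_one₀ (norm_nonneg y) hy)
  gcongr
  exact hS y hyS hy

theorem mul_volume_le_betaMeasure (hβ : 0 ≤ β) (ht : 0 ≤ t) (hS : ∀ y ∈ S, ‖y‖ ^ 2 ≤ 1 - t) :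
    ENNReal.ofReal ((β + 1) / Real.pi * t ^ β) * volume S ≤ betaMeasure β S := by
  have hball : S ⊆ closedBall 0 1 := fun y hy =>
    mem_closedBall_zero_iff.2 <| (sq_le_one_iff₀ (norm_nonneg y)).1 <| by linarith [hS y hy]
  rw [betaMeasure_apply, Set.inter_eq_right.2 hball, ← setLIntegral_const]
  refine setLIntegral_mono (by fun_prop) fun y hy => ?_
  gcongr
  linarith [hS y hy]

theorem betaMeasure_real_compl_ball_le (hβ : 0 ≤ β) (hh : 0 ≤ h) (hh1 : h ≤ 1) :
    (betaMeasure β).real (ball 0 (1 - h))ᶜ ≤ (2 * h) ^ (β + 1) := by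
  have : 0 ≤ 1 - (1 - h) ^ 2 := by nlinarith
  rw [measureReal_def, betaMeasure_compl_ball hβ (by linarith) (by linarith),
    ENNReal.toReal_ofReal (by positivity)]
  gcongr
  nlinarith

theorem rpow_add_three_halves (hh : 0 < h) : h ^ (β + 3 / 2) = h ^ β * (h * √h) := by
  rw [Real.sqrt_eq_rpow, ← Real.rpow_one_add' hh.le (by norm_num), ← Real.rpow_add hh]
  norm_num

theorem cap_subset_orthonormalBox (b : OrthonormalBasis (Fin 2) ℝ (EuclideanSpace ℝ (Fin 2)))
    (hh : h ≤ 1) :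
    closedBall 0 1 ∩ cap (b 0) h ⊆ orthonormalBox b ![1 - h, -√(2 * h)] ![1, √(2 * h)] := by
  rintro y ⟨hy, hcap⟩
  have hnorm := b.sum_sq_norm_inner_right y
  have hy1 := pow_le_one₀ (n := 2) (norm_nonneg y) (mem_closedBall_zero_iff.1 hy)
  simp only [cap, Set.mem_ofPred_eq] at hcap
  simp only [Fin.sum_univ_two, Real.norm_eq_abs, sq_abs] at hnorm
  simp only [orthonormalBox, Fin.forall_fin_two, Set.mem_ofPred_eq, Matrix.cons_val_zero,
    Matrix.cons_val_one, Set.mem_Icc]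
  exact ⟨⟨hcap, by nlinarith⟩, abs_le.1 (Real.abs_le_sqrt (by nlinarith))⟩

theorem betaMeasure_real_cap_le (hβ : 0 ≤ β) (hx : ‖x‖ ≤ 1) (hh : 0 < h) (hh1 : h < 1) :
    (betaMeasure β).real (cap x h) ≤
      (β + 1) / Real.pi * 2 ^ β * (2 * √2) * h ^ (β + 3 / 2) := by
  obtain ⟨u, hu, hxu⟩ := exists_norm_eq_one_cap_subset_cap hx hh1
  obtain ⟨b, rfl⟩ := exists_orthonormalBasis_zero_eq finrank_euclideanSpace_fin hu
  refine ENNReal.toReal_le_of_le_ofReal (by positivity) ?_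
  calc betaMeasure β (cap x h) ≤ betaMeasure β (cap (b 0) h) := measure_mono hxu
    _ ≤ ENNReal.ofReal ((β + 1) / Real.pi * (2 * h) ^ β) *
        volume (closedBall 0 1 ∩ cap (b 0) h) := by
      refine betaMeasure_le_mul_volume hβ fun y hy hy1 => ?_
      have := (show 1 - h ≤ ⟪b 0, y⟫ from hy).trans
        ((real_inner_le_norm _ _).trans_eq (by rw [hu, one_mul]))
      nlinarith
    _ ≤ ENNReal.ofReal ((β + 1) / Real.pi * (2 * h) ^ β) *
        volume (orthonormalBox b ![1 - h, -√(2 * h)] ![1, √(2 * h)]) := by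
      gcongr
      exact cap_subset_orthonormalBox b hh1.le
    _ = ENNReal.ofReal ((β + 1) / Real.pi * 2 ^ β * (2 * √2) * h ^ (β + 3 / 2)) := by
      rw [volume_orthonormalBox, Fin.prod_univ_two, ← ENNReal.ofReal_mul (by simpa using hh.le),
        ← ENNReal.ofReal_mul (by positivity), rpow_add_three_halves hh,
        Real.mul_rpow zero_le_two hh.le, Real.sqrt_mul zero_le_two]
      simp only [Matrix.cons_val_zero, Matrix.cons_val_one]
      ring_nf

theorem norm_sq_le_of_mem_orthonormalBox
    {b : OrthonormalBasis (Fin 2) ℝ (EuclideanSpace ℝ (Fin 2))} (hh : 0 ≤ h) (hh1 : h ≤ 1)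
    {y : EuclideanSpace ℝ (Fin 2)}
    (hy : y ∈ orthonormalBox b ![1 - h, -(√h / 2)] ![1 - h / 2, √h / 2]) :
    ‖y‖ ^ 2 ≤ 1 - h / 2 := by
  simp only [orthonormalBox, Fin.forall_fin_two, Set.mem_ofPred_eq, Matrix.cons_val_zero,
    Matrix.cons_val_one, Set.mem_Icc] at hy
  obtain ⟨⟨hl₀, hu₀⟩, hl₁, hu₁⟩ := hy
  have hfst : ⟪b 0, y⟫ ^ 2 ≤ (1 - h / 2) ^ 2 := pow_le_pow_left₀ (by linarith) hu₀ 2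
  have hsnd : ⟪b 1, y⟫ ^ 2 ≤ h / 4 := by
    calc ⟪b 1, y⟫ ^ 2 ≤ (√h / 2) ^ 2 := sq_le_sq' hl₁ hu₁
      _ = h / 4 := by rw [div_pow, Real.sq_sqrt hh]; norm_num
  rw [← b.sum_sq_norm_inner_right y]
  simp only [Fin.sum_univ_two, Real.norm_eq_abs, sq_abs]
  nlinarith

theorem le_betaMeasure_real_cap (hβ : 0 ≤ β) (hu : ‖u‖ = 1) (hh : 0 < h) (hh1 : h ≤ 1) :
    (β + 1) / Real.pi * (1 / 2) ^ β * (1 / 2) * h ^ (β + 3 / 2) ≤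
      (betaMeasure β).real (cap u h) := by
  have := isProbabilityMeasure_betaMeasure hβ
  obtain ⟨b, rfl⟩ := exists_orthonormalBasis_zero_eq finrank_euclideanSpace_fin hu
  refine (ENNReal.ofReal_le_iff_le_toReal (measure_ne_top _ _)).1 ?_
  set B := orthonormalBox b ![1 - h, -(√h / 2)] ![1 - h / 2, √h / 2] with hB
  calc ENNReal.ofReal ((β + 1) / Real.pi * (1 / 2) ^ β * (1 / 2) * h ^ (β + 3 / 2))
      = ENNReal.ofReal ((β + 1) / Real.pi * (h / 2) ^ β) * volume B := by
        rw [hB, volume_orthonormalBox, Fin.prod_univ_two,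
          ← ENNReal.ofReal_mul (by simpa using (half_le_self hh.le)),
          ← ENNReal.ofReal_mul (by positivity), rpow_add_three_halves hh, div_eq_mul_one_div h 2,
          Real.mul_rpow hh.le (by norm_num)]
        simp only [Matrix.cons_val_zero, Matrix.cons_val_one]
        ring_nf
    _ ≤ betaMeasure β B := mul_volume_le_betaMeasure hβ (by positivity) fun y hy =>
        norm_sq_le_of_mem_orthonormalBox hh.le hh1 hy
    _ ≤ betaMeasure β (cap (b 0) h) := measure_mono fun y hy => (hy 0).1

end BetaMeasureCap

theorem exists_integral_abs_hullVertexDiff_pow_betaMeasure_le {β : ℝ} (hβ : 0 ≤ β) {p : ℕ}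
    (hp : p ≠ 0) :
    ∃ c > 0, ∃ C > 0, ∀ (n k : ℕ) (h t : ℝ), 0 < h → 4 * h < 1 → 0 < t → 0 < k →
      4 * Real.pi ≤ k * h →
      ∫ q, |hullVertexDiff q.1 q.2| ^ p
          ∂(betaMeasure β).prod (Measure.pi fun _ : Fin n => betaMeasure β) ≤
        (n + 1) ^ p * (k * Real.exp (-(n * (c * h ^ (β + 3 / 2))))) +
        p.factorial / t ^ p * Real.exp t * ((2 * h) ^ (β + 1) *
          Real.exp (n * ((Real.exp t - 1) * (C * h ^ (β + 3 / 2))))) := by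
  have := isProbabilityMeasure_betaMeasure hβ
  set c := (β + 1) / Real.pi * (1 / 2) ^ β * (1 / 2)
  set C := (β + 1) / Real.pi * 2 ^ β * (2 * √2)
  refine ⟨c * (1 / 2) ^ (β + 3 / 2), by positivity, C * 4 ^ (β + 3 / 2), by positivity,
    fun n k h t hh hh4 ht hk hkh => ?_⟩
  obtain ⟨N, hNk, hN1, hN⟩ := exists_finset_unit_net hk
  have hk' : (0 : ℝ) < k := Nat.cast_pos.2 hk
  have hmesh : 2 * Real.pi / k ≤ h / 2 := by
    rw [div_le_iff₀ hk']
    linarith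
  have hlower (v) (hv : v ∈ N) :
      c * (1 / 2) ^ (β + 3 / 2) * h ^ (β + 3 / 2) ≤ (betaMeasure β).real (cap v (h / 2)) := by
    refine le_of_eq_of_le ?_
      (le_betaMeasure_real_cap hβ (hN1 v hv) (half_pos hh) (by linarith))
    rw [div_eq_mul_one_div h 2, Real.mul_rpow hh.le (by norm_num)]
    ring
  have hupper (x : EuclideanSpace ℝ (Fin 2)) (hx : ‖x‖ ≤ 1) :
      (betaMeasure β).real (cap x (4 * h)) ≤ C * 4 ^ (β + 3 / 2) * h ^ (β + 3 / 2) := by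
    rw [mul_assoc, ← Real.mul_rpow (by norm_num) hh.le]
    exact betaMeasure_real_cap_le hβ hx (by positivity) hh4
  refine (integral_abs_hullVertexDiff_pow_le (ae_betaMeasure_norm_le_one β) (by linarith) ht
    (fun u hu => (hN u hu).imp fun v hv => ⟨hv.1, hv.2.trans hmesh⟩) hlower hupper hp).trans ?_
  rw [Fintype.card_fin]
  gcongr
  exact betaMeasure_real_compl_ball_le hβ hh.le (by linarith)

section CapHeight

open Filter Topology

variable {β K : ℝ} {n : ℕ}

/-- The height of the caps used for `n` points: a cap of this height has `β`-measure of order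
`K log n / n`. -/
noncomputable def capHeight (β K : ℝ) (n : ℕ) : ℝ :=
  (K * Real.log n / n) ^ (1 / (β + 3 / 2))

theorem capHeight_pos (hK : 0 < K) (hn : 1 < n) : 0 < capHeight β K n := by
  have := Real.log_pos (Nat.one_lt_cast.2 hn)
  rw [capHeight]
  positivity

theorem capHeight_rpow_add_three_halves (hβ : 0 ≤ β) (hK : 0 ≤ K) :
    capHeight β K n ^ (β + 3 / 2) = K * Real.log n / n := by
  have := Real.log_natCast_nonneg n
  rw [capHeight, ← Real.rpow_mul (by positivity), one_div_mul_cancel (by positivity),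
    Real.rpow_one]

theorem capHeight_rpow_add_one (hβ : 0 ≤ β) (hK : 0 ≤ K) :
    capHeight β K n ^ (β + 1) =
      K ^ (1 - 1 / (2 * β + 3)) * Real.log n ^ (1 - 1 / (2 * β + 3)) *
        (n : ℝ) ^ (1 / (2 * β + 3) - 1) := by
  have hlog := Real.log_natCast_nonneg n
  have hexp : 1 / (β + 3 / 2) * (β + 1) = 1 - 1 / (2 * β + 3) := by
    field_simp
    ring
  rw [capHeight, ← Real.rpow_mul (by positivity), hexp,
    Real.div_rpow (by positivity) n.cast_nonneg, Real.mul_rpow hK hlog, div_eq_mul_inv,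
    ← Real.rpow_neg n.cast_nonneg, neg_sub]

theorem tendsto_capHeight (hβ : 0 ≤ β) (K : ℝ) : Tendsto (capHeight β K) atTop (𝓝 0) := by
  have hlog : Tendsto (fun n : ℕ => K * Real.log n / n) atTop (𝓝 0) := by
    have := (Real.isLittleO_log_id_atTop.tendsto_div_nhds_zero.comp
      tendsto_natCast_atTop_atTop).const_mul K
    simpa [Function.comp_def, mul_div_assoc] using this
  have hexp : 0 < 1 / (β + 3 / 2) := by positivity
  have := hlog.rpow_const (p := 1 / (β + 3 / 2)) (.inr hexp.le)
  rw [Real.zero_rpow hexp.ne'] at this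
  exact this

theorem eventually_le_mul_capHeight (hβ : 0 ≤ β) (hK : 0 < K) (A : ℝ) :
    ∀ᶠ n : ℕ in atTop, A ≤ n * capHeight β K n := by
  have hlog : Tendsto (fun n : ℕ => K * Real.log n) atTop atTop :=
    (Real.tendsto_log_atTop.comp tendsto_natCast_atTop_atTop).const_mul_atTop hK
  filter_upwards [hlog.eventually_ge_atTop A, eventually_gt_atTop 1,
    (tendsto_capHeight hβ K).eventually_lt_const one_pos] with n hA hn hh1
  have hn0 : (n : ℝ) ≠ 0 := by positivity
  calc A ≤ K * Real.log n := hA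
    _ = n * capHeight β K n ^ (β + 3 / 2) := by
      rw [capHeight_rpow_add_three_halves hβ hK.le, mul_div_cancel₀ _ hn0]
    _ ≤ n * capHeight β K n := by
      gcongr
      exact Real.rpow_le_self_of_le_one (capHeight_pos hK hn).le hh1.le (by linarith)

theorem succ_pow_mul_exp_neg_mul_log_le (p : ℕ) (hn : 0 < n) :
    ((n : ℝ) + 1) ^ p * (4 * n * Real.exp (-((p + 2) * Real.log n))) ≤ 4 * 2 ^ p * (n : ℝ)⁻¹ := by
  have hn1 : (1 : ℝ) ≤ n := Nat.one_le_cast.2 hn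
  have hexp : Real.exp (-((p + 2) * Real.log n)) = ((n : ℝ) ^ (p + 2))⁻¹ := by
    rw [Real.exp_neg, ← Real.exp_log (show (0 : ℝ) < n ^ (p + 2) by positivity), Real.log_pow]
    push_cast
    rfl
  calc ((n : ℝ) + 1) ^ p * (4 * n * Real.exp (-((p + 2) * Real.log n)))
      ≤ (2 * n) ^ p * (4 * n * ((n : ℝ) ^ (p + 2))⁻¹) := by
        rw [hexp]
        gcongr
        linarith
    _ = 4 * 2 ^ p * (n : ℝ)⁻¹ := by
        rw [mul_pow, pow_add]
        field_simp

theorem factorial_div_inv_pow_mul_exp_le (p : ℕ) {L A s : ℝ} (hL : 1 ≤ L) (hA : 0 ≤ A)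
    (hs : 0 ≤ s) :
    p.factorial / L⁻¹ ^ p * Real.exp L⁻¹ * (A * Real.exp ((Real.exp L⁻¹ - 1) * (s * L))) ≤
      p.factorial * Real.exp 1 * Real.exp (2 * s) * L ^ p * A := by
  have hinv : L⁻¹ ≤ 1 := inv_le_one_of_one_le₀ hL
  have hexp : Real.exp L⁻¹ - 1 ≤ 2 * L⁻¹ := by
    have habs : |L⁻¹| = L⁻¹ := abs_of_nonneg (by positivity)
    simpa only [habs] using (le_abs_self _).trans (Real.abs_exp_sub_one_le (habs.trans_le hinv))
  have hsL : (Real.exp L⁻¹ - 1) * (s * L) ≤ 2 * s :=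
    calc (Real.exp L⁻¹ - 1) * (s * L) ≤ 2 * L⁻¹ * (s * L) := by gcongr
      _ = 2 * s := by field_simp
  calc p.factorial / L⁻¹ ^ p * Real.exp L⁻¹ * (A * Real.exp ((Real.exp L⁻¹ - 1) * (s * L)))
      ≤ p.factorial / L⁻¹ ^ p * Real.exp 1 * (A * Real.exp (2 * s)) := by gcongr
    _ = p.factorial * Real.exp 1 * Real.exp (2 * s) * L ^ p * A := by
        rw [inv_pow, div_inv_eq_mul]
        ring

theorem exists_eventually_integral_abs_hullVertexDiff_pow_betaMeasure_le (hβ : 0 ≤ β) {p : ℕ}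
    (hp : p ≠ 0) :
    ∃ K > 0, ∃ A > 0, ∀ᶠ n : ℕ in atTop,
      ∫ q, |hullVertexDiff q.1 q.2| ^ p
          ∂(betaMeasure β).prod (Measure.pi fun _ : Fin n => betaMeasure β) ≤
        4 * 2 ^ p * (n : ℝ)⁻¹ + A * Real.log n ^ p * capHeight β K n ^ (β + 1) := by
  obtain ⟨c, hc, C, hC, hbound⟩ := exists_integral_abs_hullVertexDiff_pow_betaMeasure_le hβ hp
  have hK : 0 < (p + 2) / c := by positivity
  set K := (p + 2) / c
  have hcK : c * K = p + 2 := mul_div_cancel₀ _ hc.ne'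
  refine ⟨K, hK, p.factorial * Real.exp 1 * Real.exp (2 * (C * K)) * 2 ^ (β + 1),
    by positivity, ?_⟩
  filter_upwards [eventually_le_mul_capHeight hβ hK Real.pi, eventually_gt_atTop 1,
    (tendsto_capHeight hβ K).eventually_lt_const (show (0 : ℝ) < 1 / 4 by norm_num),
    (Real.tendsto_log_atTop.comp tendsto_natCast_atTop_atTop).eventually_ge_atTop 1]
    with n hnet hn hheight (hlog : 1 ≤ Real.log n)
  have hh := capHeight_pos (β := β) hK hn
  have hmass (b : ℝ) : n * (b * capHeight β K n ^ (β + 3 / 2)) = b * K * Real.log n := by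
    rw [capHeight_rpow_add_three_halves hβ hK.le]
    field_simp
  have hfirst := succ_pow_mul_exp_neg_mul_log_le p (zero_lt_one.trans hn)
  have hsecond := factorial_div_inv_pow_mul_exp_le p hlog
    (show 0 ≤ (2 * capHeight β K n) ^ (β + 1) by positivity) (show 0 ≤ C * K by positivity)
  refine (hbound n (4 * n) (capHeight β K n) (Real.log n)⁻¹ hh (by linarith) (by positivity)
    (by positivity) (by push_cast; linarith)).trans ?_
  rw [mul_left_comm (n : ℝ) (Real.exp _ - 1), hmass, hmass, hcK]
  push_cast
  refine (add_le_add hfirst hsecond).trans_eq ?_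
  rw [Real.mul_rpow zero_le_two hh.le]
  ring

end CapHeight

theorem first_order_difference_moments_general (β : ℝ) (hβ : 0 ≤ β) (p : ℕ) (hp : 1 ≤ p) :
    ∃ c : ℝ, 0 < c ∧ ∃ N₀ : ℕ, ∀ n : ℕ, N₀ ≤ n →
      (∫ ω : Fin (n + 1) → EuclideanSpace ℝ (Fin 2),
          |vertCount ω - vertCount (ω ∘ Fin.castSucc)| ^ p ∂ betaPi β (n + 1)) ≤
        c * Real.log n ^ ((p : ℝ) + 1 - 1 / (2 * β + 3)) * (n : ℝ) ^ (1 / (2 * β + 3) - 1) := by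
  obtain ⟨K, hK, A, hA, hbound⟩ :=
    exists_eventually_integral_abs_hullVertexDiff_pow_betaMeasure_le hβ
      (Nat.one_le_iff_ne_zero.1 hp)
  have hγ : 1 / (2 * β + 3) ≤ 1 := div_le_one_of_le₀ (by linarith) (by positivity)
  refine ⟨4 * 2 ^ p + A * K ^ (1 - 1 / (2 * β + 3)), by positivity,
    Filter.eventually_atTop.1 ?_⟩
  filter_upwards [hbound, Filter.eventually_ge_atTop 1,
    (Real.tendsto_log_atTop.comp tendsto_natCast_atTop_atTop).eventually_ge_atTop 1]
    with n hbound hn (hlog : 1 ≤ Real.log n)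
  simp only [vertCount_sub_eq_hullVertexDiff, betaPi]
  rw [integral_pi_fin_succ_last (fun q => |hullVertexDiff q.1 q.2| ^ p)]
  have hinv : (n : ℝ)⁻¹ ≤
      Real.log n ^ ((p : ℝ) + 1 - 1 / (2 * β + 3)) * (n : ℝ) ^ (1 / (2 * β + 3) - 1) := by
    rw [← Real.rpow_neg_one, ← one_mul ((n : ℝ) ^ (-1 : ℝ))]
    gcongr
    · exact Real.one_le_rpow hlog (by linarith [p.cast_nonneg (α := ℝ)])
    · exact Nat.one_le_cast.2 hn
    · linarith [show 0 ≤ 1 / (2 * β + 3) by positivity]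
  calc _ ≤ 4 * 2 ^ p * (n : ℝ)⁻¹ + A * Real.log n ^ p * capHeight β K n ^ (β + 1) := hbound
    _ = 4 * 2 ^ p * (n : ℝ)⁻¹ + A * K ^ (1 - 1 / (2 * β + 3)) *
        (Real.log n ^ ((p : ℝ) + 1 - 1 / (2 * β + 3)) * (n : ℝ) ^ (1 / (2 * β + 3) - 1)) := by
      rw [capHeight_rpow_add_one hβ hK.le, add_sub_assoc, Real.rpow_add (by positivity),
        Real.rpow_natCast]
      ring
    _ ≤ _ := by
      rw [mul_assoc _ (Real.log n ^ _), add_mul]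
      gcongr

/-- moments of the first order difference of the vertex count. For
`d ≥ 4`, `β = d/2 - 2` and `p ≥ 1` there are `c > 0` and `N₀` such that for `n ≥ N₀`,
`E[ |f₀(Q_{n+1}) - f₀(Qₙ)|^p ] ≤ c·(log n)^{p+1-1/(d-1)}·n^{1/(d-1)-1}`. -/
theorem first_order_difference_moments (d : ℕ) (hd : 4 ≤ d)
    (β : ℝ) (hβ : β = (d : ℝ) / 2 - 2) (p : ℕ) (hp : 1 ≤ p) :
    ∃ c : ℝ, 0 < c ∧ ∃ N₀ : ℕ, ∀ n : ℕ, N₀ ≤ n →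
      (∫ ω : Fin (n + 1) → EuclideanSpace ℝ (Fin 2),
          |vertCount ω - vertCount (ω ∘ Fin.castSucc)| ^ p ∂ betaPi β (n + 1)) ≤
        c * Real.log n ^ ((p : ℝ) + 1 - 1 / ((d : ℝ) - 1)) *
          (n : ℝ) ^ (1 / ((d : ℝ) - 1) - 1) := by
  have hd' : (4 : ℝ) ≤ d := Nat.ofNat_le_cast.2 hd
  rw [show (d : ℝ) - 1 = 2 * β + 3 by linarith]
  exact first_order_difference_moments_general β (by linarith) p hp
end
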